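/- arXiv:2103.11347 — 2 statements merged into one kernel-verified Lean document; each statement's English description precedes it below -/
import Mathlib

section
/- Let β ∈ GL₃(ℂ) induce an automorphism of ℙ²(ℂ) and let L₁, L₂, L₃ be lines in ℙ²(ℂ) lying in pairwise distinct β-orbits (β^k(L_i) ≠ L_j for all k ∈ ℤ and all i ≠ j). Let P ∈ L₁ be a point such that the set of points of the β-orbit of P lying on L₁ is infinite, and such that β^m(P) ∈ L₂ for some integer m and β^k(P) ∈ L₃ for some integer k. Then the β-orbit of the line L₁ is finite (the set {β^n(L₁) : n ∈ ℤ} of lines is finite), and only finitely many points of the β-orbit of P lie on L₂ ∪ L₃ (the set {Q ∈ ℙ²(ℂ) : Q = β^n(P) for some n ∈ ℤ and Q ∈ L₂ ∪ L₃} is finite). -/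
noncomputable section

open Projectivization

/-- The projective plane `ℙ²(ℂ)`. -/
abbrev ProjPlane := Projectivization ℂ (Fin 3 → ℂ)

/-- The automorphism of `ℙ²(ℂ)` induced by a linear automorphism `g` of `ℂ³`. -/
def projAct (g : (Fin 3 → ℂ) ≃ₗ[ℂ] (Fin 3 → ℂ)) (x : ProjPlane) : ProjPlane :=
  Projectivization.map g.toLinearMap g.injective x

/-- The point `P ∈ ℙ²(ℂ)` lies on the line which is the projectivization of the
2-dimensional subspace `W ⊂ ℂ³`. -/
def OnLine (P : ProjPlane) (W : Submodule ℂ (Fin 3 → ℂ)) : Prop :=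
  P.submodule ≤ W


section Helpers

open Polynomial

lemma hansel {O : Type*} [CommRing O] [IsDomain O] [CharZero O] (p : ℕ) (hp : p.Prime)
    (hsep : ∀ z : O, (∀ k : ℕ, (p : O) ^ k ∣ z) → z = 0) (d : ℕ → O)
    (w : ℕ → O) (hw : ∀ n m, n ≤ m → w n = ∑ k ∈ Finset.range (m+1), (n.choose k : O) * (p:O)^(2*k) * d k)
    (hinf : {n | w n = 0}.Infinite) (n : ℕ) : w n = 0 := by
  classical
  apply hsep
  intro K
  obtain ⟨T, hT, hcard⟩ := hinf.exists_subset_card_eq K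
  set m := max n (T.sup id) with hm
  have hTm : ∀ t ∈ T, t ≤ m := fun t ht => le_max_of_le_right (Finset.le_sup (f := id) ht)
  set c := m.factorial / p ^ (m.factorial.factorization p) with hc
  have hcop : Nat.Coprime p c := Nat.coprime_ordCompl hp (Nat.factorial_ne_zero m)
  have hk : ∀ k, ∃ e : ℕ, k ≤ m → c * p ^ k = e * k.factorial := by
    intro k
    by_cases hkm : k ≤ m
    · have h1 : k.factorial / p ^ (k.factorial.factorization p) ∣ c :=
        Nat.ordCompl_dvd_ordCompl_of_dvd (Nat.factorial_dvd_factorial hkm) p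
      have h2 : p ^ (k.factorial.factorization p) ∣ p ^ k := by
        apply pow_dvd_pow
        have := Fact.mk hp
        rw [Nat.factorization_def _ hp]
        have h3 := sub_one_mul_padicValNat_factorial (p := p) k
        have h4 : 1 ≤ p - 1 := by have := hp.two_le; omega
        have h5 : padicValNat p k.factorial ≤ (p-1) * padicValNat p k.factorial :=
          Nat.le_mul_of_pos_left _ h4
        omega
      have h6 := mul_dvd_mul h1 h2
      rw [mul_comm (k.factorial / _), Nat.ordProj_mul_ordCompl_eq_self] at h6
      obtain ⟨e, he⟩ := h6
      exact ⟨e, fun _ => by rw [he, mul_comm]⟩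
    · exact ⟨0, fun h => absurd h hkm⟩
  choose e he using hk
  let G : O[X] := ∑ k ∈ Finset.range (m+1), C (d k * (e k : O)) * ∏ i ∈ Finset.range k, (X - C ((p:O) * (i:O)))
  have hG : ∀ x, x ≤ m → G.eval ((p:O) * (x:O)) = (c:O) * w x := by
    intro x hx
    rw [hw x m hx, Finset.mul_sum]
    simp only [G, eval_finsetSum, eval_mul, eval_C, eval_prod, eval_sub, eval_X]
    apply Finset.sum_congr rfl
    intro k hk
    have hkm : k ≤ m := by simpa [Nat.lt_succ_iff] using hk
    have h1 : ∏ i ∈ Finset.range k, ((p:O) * (x:O) - (p:O) * (i:O)) = (p:O)^k * (x.descFactorial k : O) := by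
      rw [← descPochhammer_eval_eq_descFactorial, descPochhammer_eval_eq_prod_range]
      simp only [← mul_sub, Finset.prod_mul_distrib, Finset.prod_const, Finset.card_range]
    have h2 : (c:O) * (p:O)^k = e k * k.factorial := by exact_mod_cast he k hkm
    rw [h1, Nat.descFactorial_eq_factorial_mul_choose]
    push_cast
    rw [two_mul, pow_add]
    linear_combination (-(d k) * (p:O)^k * (x.choose k : O)) * h2
  have hp0 : (p:O) ≠ 0 := by exact_mod_cast hp.ne_zero
  have hdvd : (∏ t ∈ T, (X - C ((p:O) * (t:O)))) ∣ G := by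
    by_cases hG0 : G = 0
    · rw [hG0]; exact dvd_zero _
    have h := (Multiset.prod_X_sub_C_dvd_iff_le_roots hG0 (T.val.map (fun t : ℕ => (p:O) * (t:O)))).2 ?_
    · rw [Multiset.map_map] at h
      exact h
    · have hinj : Function.Injective (fun t : ℕ => (p:O) * (t:O)) := by
        intro a b hab
        exact_mod_cast mul_left_cancel₀ hp0 hab
      rw [Multiset.le_iff_subset (T.nodup.map hinj)]
      intro z hz
      obtain ⟨t, ht, rfl⟩ := Multiset.mem_map.1 hz
      rw [mem_roots hG0, IsRoot.def, hG t (hTm t ht), show w t = 0 from hT ht, mul_zero]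
  have h7 : (p:O)^K ∣ (c:O) * w n := by
    rw [← hG n (le_max_left _ _)]
    obtain ⟨Q, hQ⟩ := hdvd
    rw [hQ, eval_mul, eval_prod]
    simp only [eval_sub, eval_X, eval_C, ← mul_sub, Finset.prod_mul_distrib, Finset.prod_const, hcard]
    rw [mul_assoc]
    exact dvd_mul_right _ _
  have h8 : IsCoprime ((p:O)^K) (c:O) := by
    apply IsCoprime.pow_left
    have : IsCoprime (p:ℤ) (c:ℤ) := Nat.isCoprime_iff_coprime.2 hcop
    simpa using this.map (Int.castRingHom O)
  exact h8.dvd_of_dvd_mul_left h7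

lemma core {O : Type*} [CommRing O] [IsDomain O] [CharZero O] (p : ℕ) (hp : p.Prime)
    (hsep : ∀ z : O, (∀ k : ℕ, (p : O) ^ k ∣ z) → z = 0) {d : ℕ}
    (A : Matrix (Fin d) (Fin d) O) (N : ℕ) (hN : 0 < N) (M : Matrix (Fin d) (Fin d) O)
    (hM : A ^ N = 1 + (p:O) • M) (l v : Fin d → O)
    (hinf : {n : ℕ | l ⬝ᵥ ((A ^ n).mulVec v) = 0}.Infinite) :
    ∃ N > 0, ∃ r, ∀ n, l ⬝ᵥ ((A ^ (r + N * n)).mulVec v) = 0 := by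
  classical
  obtain ⟨M', hM'⟩ : ∃ M' : Matrix (Fin d) (Fin d) O, A ^ (N * p) = 1 + ((p:O)^2) • M' := by
    have key : ∀ n : ℕ, ∃ M' : Matrix (Fin d) (Fin d) O,
        (1 + (p:O) • M) ^ n = 1 + ((n:O) * (p:O)) • M + ((p:O)^2) • M' := by
      intro n
      induction n with
      | zero => exact ⟨0, by simp⟩
      | succ n ih =>
        obtain ⟨M', h⟩ := ih
        refine ⟨(n:O) • (M * M) + M' + (p:O) • (M' * M), ?_⟩
        rw [pow_succ, h]
        simp only [mul_add, add_mul, one_mul, mul_one, Matrix.smul_mul, Matrix.mul_smul]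
        push_cast
        module
    obtain ⟨M', h⟩ := key p
    refine ⟨M + M', ?_⟩
    rw [pow_mul, hM, h]
    module
  set N' := N * p with hN'def
  have hN' : 0 < N' := Nat.mul_pos hN hp.pos
  obtain ⟨r, hr⟩ : ∃ r, {n : ℕ | l ⬝ᵥ ((A ^ (r + N' * n)).mulVec v) = 0}.Infinite := by
    by_contra hcon
    push Not at hcon
    apply hinf
    refine ((Set.finite_lt_nat N').biUnion (fun r _ => (hcon r).image (fun n => r + N' * n))).subset ?_
    intro n hn
    simp only [Set.mem_iUnion]
    refine ⟨n % N', Nat.mod_lt _ hN', n / N', ?_, Nat.mod_add_div n N'⟩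
    simpa [Nat.mod_add_div n N'] using hn
  refine ⟨N', hN', r, ?_⟩
  refine hansel p hp hsep (fun k => l ⬝ᵥ ((M' ^ k * A ^ r).mulVec v)) _ ?_ hr
  intro n m hnm
  have h1 : A ^ (r + N' * n) = ∑ k ∈ Finset.range (m+1), ((n.choose k : O) * (p:O)^(2*k)) • (M' ^ k * A ^ r) := by
    rw [add_comm, pow_add, pow_mul, hM', add_comm, (Commute.one_right _).add_pow, Finset.sum_mul]
    have : Finset.range (n+1) ⊆ Finset.range (m+1) := Finset.range_subset_range.2 (by omega)
    rw [Finset.sum_subset this]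
    · apply Finset.sum_congr rfl
      intro k _
      rw [one_pow, mul_one, _root_.smul_pow, ← pow_mul, ← nsmul_eq_mul', ← Nat.cast_smul_eq_nsmul O, smul_smul, Matrix.smul_mul]
    · intro k _ hk
      rw [Nat.choose_eq_zero_of_lt (by simpa using hk)]
      simp
  simp only [h1, Matrix.sum_mulVec, Matrix.smul_mulVec, dotProduct_sum, dotProduct_smul, smul_eq_mul]

lemma order {O : Type*} [CommRing O] (p : ℕ) (hp : p.Prime) {d : ℕ}
    (A : Matrix (Fin d) (Fin d) O)
    (hA : ∀ i j, IsIntegral ℤ (Ideal.Quotient.mk (Ideal.span {(p:O)}) (A i j)))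
    (hdet : IsUnit (Ideal.Quotient.mk (Ideal.span {(p:O)}) A.det)) :
    ∃ N > 0, ∃ M : Matrix (Fin d) (Fin d) O, A ^ N = 1 + (p:O) • M := by
  classical
  set q := Ideal.Quotient.mk (Ideal.span {(p:O)}) with hq
  let C := Algebra.adjoin ℤ (Set.range (fun ij : Fin d × Fin d => q (A ij.1 ij.2)))
  have hfg : (Subalgebra.toSubmodule C).FG :=
    fg_adjoin_of_finite (Set.finite_range _) (by rintro _ ⟨ij, rfl⟩; exact hA _ _)
  have : Module.Finite ℤ C := Module.Finite.iff_fg.2 hfg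
  have hqp : (p : O ⧸ Ideal.span {(p:O)}) = 0 := by
    have : q (p:O) = 0 := Ideal.Quotient.eq_zero_iff_mem.2 (Ideal.mem_span_singleton_self _)
    simpa using this
  have : Finite C := by
    apply Module.finite_of_fg_torsion
    rintro x
    refine ⟨⟨(p:ℤ), mem_nonZeroDivisors_of_ne_zero (by exact_mod_cast hp.ne_zero)⟩, ?_⟩
    apply Subtype.ext
    have : ((p:ℤ) • x : C) = (p:ℤ) • x := rfl
    simp [Submonoid.smul_def, hqp]
  let B : Matrix (Fin d) (Fin d) C := fun i j => ⟨q (A i j), Algebra.subset_adjoin ⟨(i,j), rfl⟩⟩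
  obtain ⟨i, j, hij, hB⟩ : ∃ i j, i < j ∧ B ^ i = B ^ j := by
    obtain ⟨i, j, hne, h⟩ := Finite.exists_ne_map_eq_of_infinite (fun n : ℕ => B ^ n)
    rcases lt_or_gt_of_ne hne with h' | h'
    · exact ⟨i, j, h', h⟩
    · exact ⟨j, i, h', h.symm⟩
  have hBA : C.val.toRingHom.mapMatrix B = q.mapMatrix A := rfl
  have h1 : (q.mapMatrix A) ^ i = (q.mapMatrix A) ^ j := by
    rw [← hBA, ← map_pow, ← map_pow, hB]
  have hu : IsUnit (q.mapMatrix A) := by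
    rw [Matrix.isUnit_iff_isUnit_det, ← RingHom.map_det]; exact hdet
  have h2 : (q.mapMatrix A) ^ (j - i) = 1 := by
    have : j = i + (j - i) := by omega
    rw [this, pow_add] at h1
    exact ((hu.pow i).mul_left_cancel (by rw [mul_one]; exact h1)).symm
  refine ⟨j - i, by omega, ?_⟩
  have h3 : ∀ a b, ∃ z, (A ^ (j-i)) a b = (1 : Matrix (Fin d) (Fin d) O) a b + (p:O) * z := by
    intro a b
    have h4 : q ((A ^ (j-i)) a b) = q ((1 : Matrix (Fin d) (Fin d) O) a b) := by
      have : q.mapMatrix (A ^ (j-i)) = q.mapMatrix 1 := by rw [map_pow, h2, map_one]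
      exact congrFun (congrFun this a) b
    rw [hq, Ideal.Quotient.eq, Ideal.mem_span_singleton] at h4
    obtain ⟨z, hz⟩ := h4
    exact ⟨z, by rw [← hz]; ring⟩
  choose M hM using h3
  exact ⟨M, by ext a b; rw [hM]; rfl⟩

lemma dvd_of_integral {S : Type*} [CommRing S] [IsDomain S] [IsIntegrallyClosed S] [Algebra S ℂ]
    (hinj : Function.Injective (algebraMap S ℂ)) (x c : S) (hx : x ≠ 0) (e : ℂ) (he : IsIntegral S e)
    (h : algebraMap S ℂ x * e = algebraMap S ℂ c) : x ∣ c := by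
  have : FaithfulSMul S ℂ := (faithfulSMul_iff_algebraMap_injective S ℂ).2 hinj
  let _ := FractionRing.liftAlgebra S ℂ
  have hx' : algebraMap S (FractionRing S) x ≠ 0 := by simpa using hx
  have hx'' : algebraMap S ℂ x ≠ 0 := (map_ne_zero_iff _ hinj).2 hx
  have h1 : e = algebraMap (FractionRing S) ℂ (algebraMap S (FractionRing S) c / algebraMap S (FractionRing S) x) := by
    rw [map_div₀, ← IsScalarTower.algebraMap_apply, ← IsScalarTower.algebraMap_apply, eq_div_iff hx'', mul_comm, h]
  rw [h1, isIntegral_algebraMap_iff (algebraMap (FractionRing S) ℂ).injective, IsIntegrallyClosed.isIntegral_iff] at he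
  obtain ⟨y, hy⟩ := he
  refine ⟨y, ?_⟩
  rw [eq_div_iff hx', ← map_mul] at hy
  rw [← IsFractionRing.injective S (FractionRing S) hy, mul_comm]

lemma sep {S : Type*} [CommRing S] [IsDomain S] [IsIntegrallyClosed S] [Algebra S ℂ]
    (hinj : Function.Injective (algebraMap S ℂ)) (p : ℕ) (hp : (p:S) ≠ 0)
    (hS : ∀ z : S, (∀ k : ℕ, (p:S)^k ∣ z) → z = 0)
    (hc : ∀ z : ℂ, ∃ c : S, c ≠ 0 ∧ IsIntegral S (algebraMap S ℂ c * z))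
    (z : integralClosure S ℂ) (hz : ∀ k : ℕ, (p : integralClosure S ℂ)^k ∣ z) : z = 0 := by
  by_contra hz0
  have hz0' : (z:ℂ) ≠ 0 := by simpa using hz0
  obtain ⟨c, hc0, hci⟩ := hc (z:ℂ)⁻¹
  apply hc0
  apply hS
  intro k
  obtain ⟨y, hy⟩ := hz k
  refine dvd_of_integral hinj _ c (pow_ne_zero k hp) _ (hci.mul y.2) ?_
  have hy' : (z:ℂ) = (p:ℂ)^k * (y:ℂ) := by rw [hy]; push_cast; rfl
  rw [map_pow, map_natCast]
  field_simp
  rw [hy']; ring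

lemma mvsep {ι : Type*} (p : ℕ) (hp : p.Prime) (z : MvPolynomial ι ℤ)
    (hz : ∀ k : ℕ, (p : MvPolynomial ι ℤ)^k ∣ z) : z = 0 := by
  ext m
  rw [MvPolynomial.coeff_zero]
  have h : ∀ k : ℕ, (p:ℤ)^k ∣ z.coeff m := by
    intro k
    have := hz k
    rw [show (p : MvPolynomial ι ℤ)^k = MvPolynomial.C ((p:ℤ)^k) by simp, MvPolynomial.C_dvd_iff_dvd_coeff] at this
    exact this m
  apply Int.eq_zero_of_abs_lt_dvd (h (z.coeff m).natAbs)
  rw [Int.abs_eq_natAbs]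
  exact_mod_cast Nat.lt_pow_self hp.one_lt

lemma exists_mult {ι : Type*} (t : ι → ℂ) (ht : IsTranscendenceBasis ℤ t) (z : ℂ) :
    ∃ H : MvPolynomial ι ℤ, H ≠ 0 ∧
      (MvPolynomial.aeval (R := ℤ) t).toRingHom.IsIntegralElem (MvPolynomial.aeval t H * z) := by
  have hz : IsAlgebraic (Algebra.adjoin ℤ (Set.range t)) z := ht.isAlgebraic.isAlgebraic z
  obtain ⟨y, hy0, hy⟩ := hz.exists_integral_multiple
  let E := ht.1.aevalEquiv
  have hE : ∀ y : Algebra.adjoin ℤ (Set.range t), (y : ℂ) = MvPolynomial.aeval t (E.symm y) := by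
    intro y
    conv_lhs => rw [← E.apply_symm_apply y]
    exact ht.1.algebraMap_aevalEquiv _
  refine ⟨E.symm y, by simpa using hy0, ?_⟩
  obtain ⟨F, hF, hF'⟩ := hy
  refine ⟨F.map (E.symm : _ →+* MvPolynomial ι ℤ), hF.map _, ?_⟩
  rw [eval₂_map, ← hE]
  have : (MvPolynomial.aeval (R := ℤ) t).toRingHom.comp (E.symm : _ →+* MvPolynomial ι ℤ) = algebraMap (Algebra.adjoin ℤ (Set.range t)) ℂ := by
    ext y
    exact (hE y).symm
  rw [this]
  exact hF'

lemma exists_mult_fin {ι κ : Type*} [Fintype κ] (t : ι → ℂ) (ht : IsTranscendenceBasis ℤ t) (z : κ → ℂ) :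
    ∃ H : MvPolynomial ι ℤ, H ≠ 0 ∧ ∀ k,
      (MvPolynomial.aeval (R := ℤ) t).toRingHom.IsIntegralElem (MvPolynomial.aeval t H * z k) := by
  classical
  choose H hH0 hH using fun k => exists_mult t ht (z k)
  refine ⟨∏ k, H k, Finset.prod_ne_zero_iff.2 fun k _ => hH0 k, fun k => ?_⟩
  rw [← Finset.prod_erase_mul _ _ (Finset.mem_univ k), map_mul, mul_assoc]
  exact RingHom.IsIntegralElem.mul _ (RingHom.isIntegralElem_map _) (hH k)


lemma lin_inj {ι : Type*} (p : ℕ) (hp : p.Prime) (a : ι → ℤ)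
    (τ σ : MvPolynomial ι ℤ →+* ℂ) (hτ : Function.Injective τ)
    (ψ : MvPolynomial ι ℤ →+* MvPolynomial ι ℤ)
    (hψ : ∀ i, ψ (MvPolynomial.X i) = (a i : MvPolynomial ι ℤ) + (p : MvPolynomial ι ℤ) * MvPolynomial.X i)
    (hστ : ∀ F, σ (ψ F) = τ F) : Function.Injective σ := by
  have key : ∀ F : MvPolynomial ι ℤ, ∃ (k : ℕ) (G : MvPolynomial ι ℤ), (p : MvPolynomial ι ℤ)^k * F = ψ G := by
    intro F
    induction F using MvPolynomial.induction_on with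
    | C c => exact ⟨0, (c : MvPolynomial ι ℤ), by simp⟩
    | add F1 F2 h1 h2 =>
      obtain ⟨k1, G1, h1⟩ := h1
      obtain ⟨k2, G2, h2⟩ := h2
      refine ⟨k1 + k2, (p : MvPolynomial ι ℤ)^k2 * G1 + (p : MvPolynomial ι ℤ)^k1 * G2, ?_⟩
      simp only [map_add, map_mul, map_pow, map_natCast, ← h1, ← h2]
      ring
    | mul_X F i h =>
      obtain ⟨k, G, h⟩ := h
      refine ⟨k + 1, G * (MvPolynomial.X i - (a i : MvPolynomial ι ℤ)), ?_⟩
      simp only [map_sub, map_mul, map_intCast, hψ, ← h]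
      ring
  rw [injective_iff_map_eq_zero]
  intro F hF
  obtain ⟨k, G, h⟩ := key F
  have h1 : τ G = 0 := by rw [← hστ, ← h, map_mul, hF, mul_zero]
  have h2 : G = 0 := hτ (by rw [h1, map_zero])
  rw [h2, map_zero] at h
  have hp0 : (p : MvPolynomial ι ℤ) ≠ 0 := by exact_mod_cast hp.ne_zero
  exact (mul_eq_zero.1 h).resolve_left (pow_ne_zero _ hp0)

lemma isUnit_left_aux {R : Type*} [CommRing R] (x y : R) (h : IsUnit (x * y)) : IsUnit x :=
  isUnit_of_mul_isUnit_left h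

lemma isUnit_cast_aux {R : Type*} [CommRing R] (p n : ℤ) (h : IsCoprime p n) (hp : (p : R) = 0) :
    IsUnit (n : R) := by
  have h2 := h.map (Int.castRingHom R)
  rw [eq_intCast, eq_intCast, hp, isCoprime_zero_left] at h2
  exact h2

/-- Skolem-Mahler-Lech for invertible matrices over `ℂ`. -/
lemma sml {d : ℕ} (β : Matrix (Fin d) (Fin d) ℂ) (hβ : β.det ≠ 0) (l v : Fin d → ℂ)
    (hinf : {n : ℕ | l ⬝ᵥ ((β ^ n).mulVec v) = 0}.Infinite) :
    ∃ N > 0, ∃ r, ∀ n, l ⬝ᵥ ((β ^ (r + N * n)).mulVec v) = 0 := by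
  classical
  obtain ⟨T, ht⟩ := exists_isTranscendenceBasis ℤ ℂ
  set t : T → ℂ := Subtype.val
  set τ : MvPolynomial T ℤ →+* ℂ := (MvPolynomial.aeval (R := ℤ) t).toRingHom with hτdef
  have hτ : Function.Injective τ := ht.1
  have hτ0 : ∀ F, F ≠ 0 → τ F ≠ 0 := fun F hF => (map_ne_zero_iff τ hτ).2 hF
  obtain ⟨H1, hH1, hβi⟩ := exists_mult_fin t ht (fun ij : Fin d × Fin d => β ij.1 ij.2)
  obtain ⟨H2, hH2, hli⟩ := exists_mult_fin t ht l
  obtain ⟨H3, hH3, hvi⟩ := exists_mult_fin t ht v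
  change ∀ k, τ.IsIntegralElem (τ H1 * _) at hβi
  change ∀ k, τ.IsIntegralElem (τ H2 * _) at hli
  change ∀ k, τ.IsIntegralElem (τ H3 * _) at hvi
  have hdet0 : (τ H1 • β).det ≠ 0 := by
    rw [Matrix.det_smul]
    exact mul_ne_zero (pow_ne_zero _ (hτ0 _ hH1)) hβ
  obtain ⟨H, hH, hei⟩ := exists_mult t ht ((τ H1 • β).det)⁻¹
  change τ.IsIntegralElem (τ H * _) at hei
  obtain ⟨a, ha⟩ : ∃ a : T → ℤ, MvPolynomial.eval a H ≠ 0 := by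
    by_contra hcon
    push Not at hcon
    exact hH (MvPolynomial.funext fun x => by rw [hcon x, map_zero])
  obtain ⟨p, hpgt, hp⟩ := Nat.exists_infinite_primes ((MvPolynomial.eval a H).natAbs + 1)
  have hpa : ¬ p ∣ (MvPolynomial.eval a H).natAbs := fun h =>
    absurd (Nat.le_of_dvd (Int.natAbs_pos.2 ha) h) (by omega)
  have hpC : (p:ℂ) ≠ 0 := by exact_mod_cast hp.ne_zero
  set σ : MvPolynomial T ℤ →+* ℂ :=
    (MvPolynomial.aeval (R := ℤ) (fun i => (t i - (a i : ℂ)) / (p:ℂ))).toRingHom with hσdef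
  set ψ : MvPolynomial T ℤ →+* MvPolynomial T ℤ :=
    (MvPolynomial.aeval (R := ℤ) (fun i => (a i : MvPolynomial T ℤ) + (p : MvPolynomial T ℤ) * MvPolynomial.X i)).toRingHom with hψdef
  have hψ : ∀ i, ψ (MvPolynomial.X i) = (a i : MvPolynomial T ℤ) + (p : MvPolynomial T ℤ) * MvPolynomial.X i := by
    intro i
    exact MvPolynomial.aeval_X _ _
  have hσX : ∀ i, σ (MvPolynomial.X i) = (t i - (a i : ℂ)) / (p:ℂ) := fun i => MvPolynomial.aeval_X _ _
  have hτX : ∀ i, τ (MvPolynomial.X i) = t i := fun i => MvPolynomial.aeval_X _ _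
  have hcomp : σ.comp ψ = τ := by
    apply MvPolynomial.ringHom_ext
    · intro r
      simp
    · intro i
      rw [RingHom.comp_apply, hψ, map_add, map_mul, map_natCast, map_intCast, hσX, hτX]
      field_simp
      ring
  have hστ : ∀ F, σ (ψ F) = τ F := fun F => by rw [← hcomp]; rfl
  have hσ : Function.Injective σ := lin_inj p hp a τ σ hτ ψ hψ hστ
  let _ : Algebra (MvPolynomial T ℤ) ℂ := σ.toAlgebra
  have hInteg : ∀ z : ℂ, τ.IsIntegralElem z → IsIntegral (MvPolynomial T ℤ) z := by
    rintro z ⟨F, hF, hz⟩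
    refine ⟨F.map ψ, hF.map _, ?_⟩
    rw [eval₂_map]
    change eval₂ (σ.comp ψ) z F = 0
    rw [hcomp]; exact hz
  let O := integralClosure (MvPolynomial T ℤ) ℂ
  have hsep : ∀ z : O, (∀ k : ℕ, (p : O) ^ k ∣ z) → z = 0 := by
    refine sep hσ p (by exact_mod_cast hp.ne_zero) (mvsep p hp) ?_
    intro z
    obtain ⟨G, hG, hGz⟩ := exists_mult t ht z
    refine ⟨ψ G, ?_, ?_⟩
    · intro h
      apply hτ0 G hG
      rw [← hστ, h, map_zero]
    · change IsIntegral _ (σ (ψ G) * z)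
      rw [hστ]
      exact hInteg _ hGz
  let τO : MvPolynomial T ℤ →+* O := (algebraMap (MvPolynomial T ℤ) O).comp ψ
  have hτO : ∀ F, ((τO F : O) : ℂ) = τ F := fun F => hστ F
  let q := Ideal.Quotient.mk (Ideal.span {(p:O)})
  have hqp : q (p:O) = 0 := Ideal.Quotient.eq_zero_iff_mem.2 (Ideal.mem_span_singleton_self _)
  have hq : q.comp τO = (Int.castRingHom _).comp (MvPolynomial.eval a) := by
    apply MvPolynomial.ringHom_ext
    · intro r
      simp
    · intro i
      have : τO (MvPolynomial.X i) = (a i : O) + (p : O) * algebraMap (MvPolynomial T ℤ) O (MvPolynomial.X i) := by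
        change algebraMap (MvPolynomial T ℤ) O (ψ _) = _
        rw [hψ, map_add, map_mul, map_natCast, map_intCast]
      rw [RingHom.comp_apply, this, map_add, map_mul, hqp]
      simp
  have hmod : ∀ z : O, τ.IsIntegralElem (z:ℂ) → IsIntegral ℤ (q z) := by
    rintro z ⟨F, hF, hz⟩
    refine ⟨F.map (MvPolynomial.eval a), hF.map _, ?_⟩
    rw [eval₂_map]
    change eval₂ ((Int.castRingHom _).comp (MvPolynomial.eval a)) (q z) F = 0
    rw [← hq, ← hom_eval₂]
    have : eval₂ τO z F = 0 := by
      apply Subtype.ext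
      have h := hom_eval₂ F τO (O.val : O →+* ℂ) z
      have h' : (O.val : O →+* ℂ).comp τO = τ := by
        apply RingHom.ext; exact hτO
      rw [h'] at h
      exact h.trans hz
    rw [this, map_zero]
  let A : Matrix (Fin d) (Fin d) O := fun i j => ⟨τ H1 * β i j, hInteg _ (hβi (i, j))⟩
  let l' : Fin d → O := fun i => ⟨τ H2 * l i, hInteg _ (hli i)⟩
  let v' : Fin d → O := fun i => ⟨τ H3 * v i, hInteg _ (hvi i)⟩
  have hAmap : (O.val : O →+* ℂ).mapMatrix A = τ H1 • β := rfl
  have hdet : IsUnit (q A.det) := by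
    let e : O := ⟨_, hInteg _ hei⟩
    have hAe : A.det * e = τO H := by
      apply Subtype.ext
      change (O.val : O →+* ℂ) (A.det) * (τ H * ((τ H1 • β).det)⁻¹) = τO H
      rw [RingHom.map_det, hAmap, hτO]
      field_simp
    apply isUnit_left_aux _ (q e)
    rw [← map_mul, hAe]
    change IsUnit ((q.comp τO) H)
    rw [hq]
    have hcop : IsCoprime (p:ℤ) (MvPolynomial.eval a H) := by
      rw [Int.isCoprime_iff_gcd_eq_one]
      exact (Nat.Prime.coprime_iff_not_dvd hp).2 hpa
    refine isUnit_cast_aux (R := O ⧸ Ideal.span {(p:O)}) (p:ℤ) _ hcop ?_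
    rw [← hqp]; simp
  obtain ⟨N, hN, M, hM⟩ := order p hp A (fun i j => hmod _ (hβi (i, j))) hdet
  have hu : ∀ n, ((l' ⬝ᵥ ((A ^ n).mulVec v') : O) : ℂ) = τ H2 * τ H3 * (τ H1) ^ n * (l ⬝ᵥ ((β ^ n).mulVec v)) := by
    intro n
    change (O.val : O →+* ℂ) _ = _
    have h1 : (O.val : O →+* ℂ) ∘ ((A ^ n).mulVec v') = ((τ H1 • β) ^ n).mulVec (τ H3 • v) := by
      rw [← hAmap, ← map_pow]
      funext i
      exact RingHom.map_mulVec (O.val : O →+* ℂ) (A ^ n) v' i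
    have h2 : (O.val : O →+* ℂ) ∘ l' = τ H2 • l := rfl
    rw [RingHom.map_dotProduct, h1, h2, _root_.smul_pow, Matrix.smul_mulVec, Matrix.mulVec_smul,
      smul_dotProduct, dotProduct_smul, dotProduct_smul, smul_eq_mul, smul_eq_mul, smul_eq_mul]
    ring
  have hz : ∀ n, l' ⬝ᵥ ((A ^ n).mulVec v') = 0 ↔ l ⬝ᵥ ((β ^ n).mulVec v) = 0 := by
    intro n
    rw [← Subtype.coe_inj, hu]
    have h0 : τ H2 * τ H3 * τ H1 ^ n ≠ 0 :=
      mul_ne_zero (mul_ne_zero (hτ0 _ hH2) (hτ0 _ hH3)) (pow_ne_zero _ (hτ0 _ hH1))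
    change _ = (0:ℂ) ↔ _
    rw [mul_eq_zero, or_iff_right h0]
  simp only [← hz] at hinf ⊢
  exact core p hp hsep A N hN M hM l' v' hinf

end Helpers

abbrev VV := Fin 3 → ℂ

lemma geo1 (γ : VV ≃ₗ[ℂ] VV) (f : VV →ₗ[ℂ] ℂ) (v : VV)
    (hinf : {n : ℕ | f ((γ ^ n) v) = 0}.Infinite) :
    ∃ N > 0, ∃ r, ∀ n : ℕ, f ((γ ^ (r + N * n)) v) = 0 := by
  have h1 : ∀ n : ℕ, f ((γ ^ n) v) =
      (fun i => f (Pi.single i 1)) ⬝ᵥ ((LinearMap.toMatrix' γ.toLinearMap ^ n).mulVec v) := by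
    intro n
    have h2 : (LinearMap.toMatrix' γ.toLinearMap ^ n).mulVec v = (γ ^ n) v := by
      induction n with
      | zero => simp
      | succ n ih =>
        rw [pow_succ', pow_succ', ← Matrix.mulVec_mulVec, ih, LinearMap.toMatrix'_mulVec]
        rfl
    rw [h2]
    conv_lhs => rw [LinearMap.pi_apply_eq_sum_univ f]
    simp only [dotProduct, smul_eq_mul]
    apply Finset.sum_congr rfl
    intro i _
    rw [mul_comm]
    congr 2
    funext j
    simp [Pi.single_apply, eq_comm]
  simp only [h1] at hinf ⊢
  refine sml _ ?_ _ _ hinf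
  rw [LinearMap.det_toMatrix']
  exact (LinearEquiv.isUnit_det' γ).ne_zero

lemma line_eq (W W' : Submodule ℂ VV) (hW : Module.finrank ℂ W = 2) (hW' : Module.finrank ℂ W' = 2)
    (x y : VV) (hx : x ≠ 0) (hxy : ∀ c : ℂ, c • x ≠ y) (h1 : x ∈ W) (h2 : y ∈ W)
    (h3 : x ∈ W') (h4 : y ∈ W') : W = W' := by
  have hli : LinearIndependent ℂ ![x, y] := (LinearIndependent.pair_iff' hx).2 hxy
  have hfr : Module.finrank ℂ (Submodule.span ℂ (Set.range ![x, y])) = 2 := by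
    rw [finrank_span_eq_card hli]; simp
  have key : ∀ U : Submodule ℂ VV, Module.finrank ℂ U = 2 → x ∈ U → y ∈ U →
      Submodule.span ℂ (Set.range ![x, y]) = U := by
    intro U hU hx hy
    apply Submodule.eq_of_le_of_finrank_eq
    · rw [Submodule.span_le]
      rintro _ ⟨i, rfl⟩
      fin_cases i
      · exact hx
      · exact hy
    · rw [hfr, hU]
  rw [← key W hW h1 h2, ← key W' hW' h3 h4]

lemma geo2 (γ : VV ≃ₗ[ℂ] VV) (W : Submodule ℂ VV) (hW : Module.finrank ℂ W = 2) (v : VV) (hv0 : v ≠ 0)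
    (hv : ∀ n : ℕ, 0 < n → ∀ c : ℂ, c • v ≠ (γ ^ n) v)
    (hinf : {n : ℕ | (γ ^ n) v ∈ W}.Infinite) :
    ∃ N : ℕ, 0 < N ∧ Submodule.map (γ ^ N).toLinearMap W = W := by
  obtain ⟨f, hf0, hf⟩ := Submodule.exists_le_ker_of_lt_top W (by
    rw [lt_top_iff_ne_top]
    rintro rfl
    rw [finrank_top] at hW
    simp at hW)
  have hWf : W = LinearMap.ker f := by
    apply Submodule.eq_of_le_of_finrank_le hf
    have h1 := LinearMap.finrank_range_add_finrank_ker f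
    have h2 : Module.finrank ℂ (LinearMap.range f) ≠ 0 := by
      rw [Ne, Submodule.finrank_eq_zero, LinearMap.range_eq_bot]
      exact hf0
    have h3 : Module.finrank ℂ VV = 3 := by simp
    omega
  have hmem : ∀ x, x ∈ W ↔ f x = 0 := fun x => by rw [hWf, LinearMap.mem_ker]
  simp only [hmem] at hinf
  obtain ⟨N, hN, r, hr⟩ := geo1 γ f v hinf
  simp only [← hmem] at hr
  refine ⟨N, hN, ?_⟩
  have e1 : (γ ^ (r + N * 1)) v = (γ ^ N) ((γ ^ (r + N * 0)) v) := by
    rw [show r + N * 1 = N + (r + N * 0) by ring, pow_add]; rfl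
  have e2 : (γ ^ (r + N * 2)) v = (γ ^ N) ((γ ^ (r + N * 1)) v) := by
    rw [show r + N * 2 = N + (r + N * 1) by ring, pow_add]; rfl
  refine line_eq _ _ ?_ hW ((γ ^ (r + N * 1)) v) ((γ ^ (r + N * 2)) v) (by simpa using hv0) ?_
    ⟨_, hr 0, e1.symm⟩ ⟨_, hr 1, e2.symm⟩ (hr 1) (hr 2)
  · rw [← hW]
    exact LinearEquiv.finrank_map_eq (γ ^ N) W
  · intro c hc
    apply hv N hN c
    apply (γ ^ (r + N * 1)).injective
    rw [map_smul, hc, show r + N * 2 = (r + N * 1) + N by ring, pow_add]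
    rfl

lemma map_mul_eq (g h : VV ≃ₗ[ℂ] VV) (W : Submodule ℂ VV) :
    Submodule.map (g * h).toLinearMap W = Submodule.map g.toLinearMap (Submodule.map h.toLinearMap W) := by
  rw [← Submodule.map_comp]; rfl

/-- The subgroup stabilising a subspace. -/
def stabW (W : Submodule ℂ VV) : Subgroup (VV ≃ₗ[ℂ] VV) where
  carrier := {g | Submodule.map g.toLinearMap W = W}
  one_mem' := Submodule.map_id W
  mul_mem' := by
    intro g h hg hh
    change Submodule.map _ _ = _
    rw [map_mul_eq, show Submodule.map h.toLinearMap W = W from hh]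
    exact hg
  inv_mem' := by
    intro g hg
    change Submodule.map _ _ = _
    conv_lhs => rw [← show Submodule.map g.toLinearMap W = W from hg]
    rw [← map_mul_eq, inv_mul_cancel]
    exact Submodule.map_id W

lemma projAct_mul (g h : VV ≃ₗ[ℂ] VV) (P : ProjPlane) : projAct (g * h) P = projAct g (projAct h P) := by
  induction P using Projectivization.ind with
  | h v hv => rfl

lemma projAct_one (P : ProjPlane) : projAct 1 P = P := by
  induction P using Projectivization.ind with
  | h v hv => rfl

/-- The subgroup stabilising a point. -/
def stabP (P : ProjPlane) : Subgroup (VV ≃ₗ[ℂ] VV) where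
  carrier := {g | projAct g P = P}
  one_mem' := projAct_one P
  mul_mem' := by
    intro g h hg hh
    change projAct _ _ = _
    rw [projAct_mul, show projAct h P = P from hh]
    exact hg
  inv_mem' := by
    intro g hg
    change projAct _ _ = _
    conv_lhs => rw [← show projAct g P = P from hg]
    rw [← projAct_mul, inv_mul_cancel]
    exact projAct_one P

lemma onLine_iff (g : VV ≃ₗ[ℂ] VV) (v : VV) (hv : v ≠ 0) (W : Submodule ℂ VV) :
    OnLine (projAct g (Projectivization.mk ℂ v hv)) W ↔ g v ∈ W := by
  unfold OnLine projAct
  rw [Projectivization.map_mk, Projectivization.submodule_mk, Submodule.span_singleton_le_iff_mem]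
  rfl

/-- Integer version. -/
lemma geo3 (β : VV ≃ₗ[ℂ] VV) (W : Submodule ℂ VV) (hW : Module.finrank ℂ W = 2) (v : VV) (hv0 : v ≠ 0)
    (hv : ∀ n : ℤ, n ≠ 0 → ∀ c : ℂ, c • v ≠ (β ^ n) v)
    (hinf : {n : ℤ | (β ^ n) v ∈ W}.Infinite) :
    ∃ N : ℤ, 0 < N ∧ β ^ N ∈ stabW W := by
  by_cases hpos : {n : ℕ | (β ^ n) v ∈ W}.Infinite
  · obtain ⟨N, hN, h⟩ := geo2 β W hW v hv0
      (fun n hn c => by simpa using hv n (by omega) c) hpos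
    refine ⟨N, by omega, ?_⟩
    rw [zpow_natCast]; exact h
  by_cases hneg : {n : ℕ | ((β⁻¹) ^ n) v ∈ W}.Infinite
  · obtain ⟨N, hN, h⟩ := geo2 β⁻¹ W hW v hv0
      (fun n hn c => by simpa using hv (-n) (by omega) c) hneg
    refine ⟨N, by omega, ?_⟩
    have h' : (β⁻¹) ^ N ∈ stabW W := h
    rw [inv_pow, inv_mem_iff] at h'
    rwa [zpow_natCast]
  exfalso
  apply hinf
  rw [Set.not_infinite] at hpos hneg
  refine ((hpos.image (fun n : ℕ => (n:ℤ))).union (hneg.image (fun n : ℕ => -(n:ℤ)))).subset ?_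
  intro n hn
  obtain ⟨m, rfl | rfl⟩ := n.eq_nat_or_neg
  · left; exact ⟨m, by simpa using hn, rfl⟩
  · right; exact ⟨m, by simpa using hn, rfl⟩

/-- If infinitely many points of the `β`-orbit of `P ∈ L₁` lie on `L₁`, and the orbit of
`P` meets both `L₂` and `L₃` (the three lines lying in pairwise distinct `β`-orbits),
then the `β`-orbit of the line `L₁` is finite, and only finitely many points of the
orbit of `P` lie on `L₂ ∪ L₃`. -/
theorem orbit_on_line_classification (β : (Fin 3 → ℂ) ≃ₗ[ℂ] (Fin 3 → ℂ))
    (W : Fin 3 → Submodule ℂ (Fin 3 → ℂ))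
    (hrank : ∀ i, Module.finrank ℂ (W i) = 2)
    (horb : ∀ (k : ℤ) (i j : Fin 3), i ≠ j →
      Submodule.map (β ^ k).toLinearMap (W i) ≠ W j)
    (P : ProjPlane) (hP : OnLine P (W 0))
    (hinf : {Q : ProjPlane | (∃ n : ℤ, Q = projAct (β ^ n) P) ∧ OnLine Q (W 0)}.Infinite)
    (hm : ∃ m : ℤ, OnLine (projAct (β ^ m) P) (W 1))
    (hk : ∃ k : ℤ, OnLine (projAct (β ^ k) P) (W 2)) :
    {M : Submodule ℂ (Fin 3 → ℂ) |
        ∃ n : ℤ, M = Submodule.map (β ^ n).toLinearMap (W 0)}.Finite ∧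
    {Q : ProjPlane | (∃ n : ℤ, Q = projAct (β ^ n) P) ∧
        (OnLine Q (W 1) ∨ OnLine Q (W 2))}.Finite := by
  classical
  induction P using Projectivization.ind with
  | h v hv0 =>
  set P := Projectivization.mk ℂ v hv0 with hPdef
  have hv : ∀ n : ℤ, n ≠ 0 → ∀ c : ℂ, c • v ≠ (β ^ n) v := by
    intro n hn c hc
    have hst : β ^ n ∈ stabP P := by
      change projAct (β ^ n) (Projectivization.mk ℂ v hv0) = Projectivization.mk ℂ v hv0
      unfold projAct
      rw [Projectivization.map_mk, Projectivization.mk_eq_mk_iff']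
      exact ⟨c, hc⟩
    apply hinf
    refine ((Set.finite_Ico (0:ℤ) |n|).image (fun k => projAct (β ^ k) P)).subset ?_
    rintro Q ⟨⟨k, rfl⟩, -⟩
    refine ⟨k % n, ⟨Int.emod_nonneg _ hn, Int.emod_lt_abs _ hn⟩, ?_⟩
    have h1 : projAct ((β ^ n) ^ (k / n)) P = P := (stabP P).zpow_mem hst _
    have h2 : β ^ k = β ^ (k % n) * (β ^ n) ^ (k / n) := by
      rw [← zpow_mul, ← zpow_add, Int.emod_add_mul_ediv]
    change projAct (β ^ (k % n)) P = projAct (β ^ k) P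
    rw [h2, projAct_mul, h1]
  have key : ∀ i, {Q : ProjPlane | (∃ n : ℤ, Q = projAct (β ^ n) P) ∧ OnLine Q (W i)}.Infinite →
      ∃ N : ℤ, 0 < N ∧ β ^ N ∈ stabW (W i) := by
    intro i hi
    apply geo3 β (W i) (hrank i) v hv0 hv
    intro hfin
    apply hi
    refine (hfin.image (fun n => projAct (β ^ n) P)).subset ?_
    rintro Q ⟨⟨n, rfl⟩, hn⟩
    exact ⟨n, (onLine_iff _ _ _ _).1 hn, rfl⟩
  obtain ⟨N, hN, hNW⟩ := key 0 hinf
  constructor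
  · refine ((Set.finite_Ico (0:ℤ) N).image (fun k => Submodule.map (β ^ k).toLinearMap (W 0))).subset ?_
    rintro _ ⟨n, rfl⟩
    refine ⟨n % N, ⟨Int.emod_nonneg _ hN.ne', Int.emod_lt_of_pos _ hN⟩, ?_⟩
    have h1 : Submodule.map ((β ^ N) ^ (n / N)).toLinearMap (W 0) = W 0 :=
      (stabW (W 0)).zpow_mem hNW _
    have h2 : β ^ n = β ^ (n % N) * (β ^ N) ^ (n / N) := by
      rw [← zpow_mul, ← zpow_add, Int.emod_add_mul_ediv]
    change Submodule.map (β ^ (n % N)).toLinearMap (W 0) = _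
    rw [h2, map_mul_eq, h1]
  · have fin : ∀ i, i ≠ 0 →
        {Q : ProjPlane | (∃ n : ℤ, Q = projAct (β ^ n) P) ∧ OnLine Q (W i)}.Finite := by
      intro i hi0
      by_contra hi
      obtain ⟨N', hN', hNW'⟩ := key i hi
      obtain ⟨_, ⟨r, rfl⟩, hr⟩ := Set.Infinite.nonempty hi
      have hr' : (β ^ r) v ∈ W i := (onLine_iff _ _ _ _).1 hr
      have hv' : v ∈ W 0 := by
        rw [← projAct_one P] at hP
        exact (onLine_iff _ _ _ _).1 hP
      have hL0 : β ^ (N * N') ∈ stabW (W 0) := by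
        rw [zpow_mul]; exact (stabW (W 0)).zpow_mem hNW _
      have hLi : β ^ (N * N') ∈ stabW (W i) := by
        rw [mul_comm, zpow_mul]; exact (stabW (W i)).zpow_mem hNW' _
      have hLpos : N * N' ≠ 0 := (mul_pos hN hN').ne'
      have st : ∀ (U : Submodule ℂ VV) (g : VV ≃ₗ[ℂ] VV), g ∈ stabW U → ∀ x ∈ U, g x ∈ U := by
        intro U g hg x hx
        have h : Submodule.map g.toLinearMap U = U := hg
        rw [← h]
        exact ⟨x, hx, rfl⟩
      refine horb r 0 i hi0.symm (line_eq _ _ ?_ (hrank i) ((β ^ r) v) ((β ^ (N * N')) ((β ^ r) v))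
        (by simpa using hv0) ?_ ⟨v, hv', rfl⟩ ?_ hr' (st _ _ hLi _ hr'))
      · exact (LinearEquiv.finrank_map_eq (β ^ r) (W 0)).trans (hrank 0)
      · intro c hc
        apply hv _ hLpos c
        apply (β ^ r).injective
        rw [map_smul, hc]
        change (β ^ (N * N') * β ^ r) v = (β ^ r * β ^ (N * N')) v
        rw [← zpow_add, ← zpow_add, add_comm]
      · refine ⟨(β ^ (N * N')) v, st _ _ hL0 _ hv', ?_⟩
        change (β ^ r * β ^ (N * N')) v = (β ^ (N * N') * β ^ r) v
        rw [← zpow_add, ← zpow_add, add_comm]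
    refine ((fin 1 (by decide)).union (fin 2 (by decide))).subset ?_
    rintro Q ⟨h, h1 | h1⟩
    · exact Or.inl ⟨h, h1⟩
    · exact Or.inr ⟨h, h1⟩
end
end

section
/- Let 0 < c < 1, fix s ∈ ℝ and an integer n ≥ 2. Let (x_k)_{k∈ℤ} and (y_k)_{k∈ℤ} be two n-periodic billiard trajectories on the ellipse C whose segments are all tangent to the caustic C_s; precisely: x_{k+n} = x_k, x_k ∈ C and x_{k+1} ≠ x_k for all k; setting w_k = (x_{k+1} − x_k)/‖x_{k+1} − x_k‖, the reflection law w_k = w_{k−1} − 2⟨w_{k−1}, ν(x_k)⟩·ν(x_k) holds for all k; and for every k there exist t_k, u_k ∈ ℝ with s·t_k² + (s − c²)·u_k² = 1 such that t_k·X + u_k·Y = 1 holds for both (X,Y) = x_k and (X,Y) = x_{k+1}; and the same conditions hold for (y_k), with unit directions w′_k and the same value of s. Then ∑_{k=0}^{n−1} ⟨w_k, w_{k+1}⟩ = ∑_{k=0}^{n−1} ⟨w′_k, w′_{k+1}⟩; that is, the sum of the cosines of the angles between consecutive segments of a periodic billiard trajectory of period n depends only on the caustic, and not on the trajectory. -/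
noncomputable section

/-- The Euclidean inner product on `ℝ × ℝ`. -/
def ip (v w : ℝ × ℝ) : ℝ := v.1 * w.1 + v.2 * w.2

/-- The Euclidean norm on `ℝ × ℝ`. -/
def nrm (v : ℝ × ℝ) : ℝ := Real.sqrt (ip v v)

/-- The boundary ellipse `C = {(x,y) : x² + y²/(1−c²) = 1}`. -/
def ellipseC (c : ℝ) : Set (ℝ × ℝ) := {q | q.1 ^ 2 + q.2 ^ 2 / (1 - c ^ 2) = 1}

/-- The outward unit normal to `C` at `q`. -/
def nuC (c : ℝ) (q : ℝ × ℝ) : ℝ × ℝ :=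
  (nrm (q.1, q.2 / (1 - c ^ 2)))⁻¹ • (q.1, q.2 / (1 - c ^ 2))

/-- The unit direction of the `k`-th segment of a (two-sided) trajectory. -/
def dirZ (x : ℤ → ℝ × ℝ) (k : ℤ) : ℝ × ℝ :=
  (nrm (x (k + 1) - x k))⁻¹ • (x (k + 1) - x k)

/-- `x` is an `n`-periodic billiard trajectory on the ellipse `C`, all of whose segments
are tangent to the caustic `C_s : x²/s + y²/(s−c²) = 1` (a line `tX + uY = 1` being
tangent to `C_s` exactly when `st² + (s−c²)u² = 1`). -/
def IsPeriodicCausticTraj (c s : ℝ) (n : ℕ) (x : ℤ → ℝ × ℝ) : Prop :=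
  (∀ k : ℤ, x (k + n) = x k) ∧
  (∀ k : ℤ, x k ∈ ellipseC c) ∧
  (∀ k : ℤ, x (k + 1) ≠ x k) ∧
  (∀ k : ℤ, dirZ x k =
    dirZ x (k - 1) - (2 * ip (dirZ x (k - 1)) (nuC c (x k))) • nuC c (x k)) ∧
  (∀ k : ℤ, ∃ t u : ℝ, s * t ^ 2 + (s - c ^ 2) * u ^ 2 = 1 ∧
    t * (x k).1 + u * (x k).2 = 1 ∧ t * (x (k + 1)).1 + u * (x (k + 1)).2 = 1)

section keys

/-- Denominators of the telescoping quantity. -/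
def Dn (i : Fin 3) (β w1 w2 h v1 v2 g : ℝ) : ℝ :=
  match i with
  | 0 => β * (h - g)
  | 1 => w1 + v1
  | 2 => w2 + v2

/-- Numerators of the telescoping quantity. -/
def Nm (i : Fin 3) (β w1 w2 h v1 v2 g : ℝ) : ℝ :=
  match i with
  | 0 => -(β - 1) * (v1 - w1) * (v2 - w2)
  | 1 => -(h + g) * (v2 - w2)
  | 2 => (h + g) * (v1 - w1)

/-- Algebraic data of two simultaneous reflection steps, with denominators cleared. -/
structure KeyHyp (β J x z r y u q M K w1 w2 h v1 v2 g w1' w2' h' v1' v2' g' : ℝ) : Prop where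
  hx : x ^ 2 = 1 - β * z ^ 2
  hy : y ^ 2 = 1 - β * u ^ 2
  hr : r ^ 2 = M - J ^ 2
  hq : q ^ 2 = K - J ^ 2
  hM : M = 1 + β * (β - 1) * z ^ 2
  hK : K = 1 + β * (β - 1) * u ^ 2
  e1 : w1 = K * (J * x - r * β * z)
  e2 : w2 = K * (r * x + J * β * z)
  e3 : h = -K * (r + J * (β - 1) * x * z)
  e4 : v1 = M * (J * y - q * β * u)
  e5 : v2 = M * (q * y + J * β * u)
  e6 : g = -M * (q + J * (β - 1) * y * u)
  d1 : w1' = K * (-J * x - r * β * z)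
  d2 : w2' = K * (r * x - J * β * z)
  d3 : h' = -K * (r - J * (β - 1) * x * z)
  d4 : v1' = M * (-J * y - q * β * u)
  d5 : v2' = M * (q * y - J * β * u)
  d6 : g' = -M * (q - J * (β - 1) * y * u)
  hM2 : β ^ 2 * z ^ 2 = M - 1 + β * z ^ 2
  hK2 : β ^ 2 * u ^ 2 = K - 1 + β * u ^ 2
  hS : K * z ^ 2 = M * u ^ 2 - u ^ 2 + z ^ 2

variable {β J x z r y u q M K w1 w2 h v1 v2 g w1' w2' h' v1' v2' g' : ℝ}

lemma KeyHyp.symm (H : KeyHyp β J x z r y u q M K w1 w2 h v1 v2 g w1' w2' h' v1' v2' g') :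
    KeyHyp β (-J) x z r y u q M K w1' w2' h' v1' v2' g' w1 w2 h v1 v2 g := by
  obtain ⟨hx, hy, hr, hq, hM, hK, e1, e2, e3, e4, e5, e6, d1, d2, d3, d4, d5, d6, a, b, c⟩ := H
  constructor <;> first | assumption | linarith

set_option maxHeartbeats 4000000 in
lemma key00 (H : KeyHyp β J x z r y u q M K w1 w2 h v1 v2 g w1' w2' h' v1' v2' g') :
    Dn 0 β w1 w2 h v1 v2 g * Dn 0 β w1' w2' h' v1' v2' g' * (2 * J * (K - M)) =
      Nm 0 β w1 w2 h v1 v2 g * Dn 0 β w1' w2' h' v1' v2' g' -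
      Dn 0 β w1 w2 h v1 v2 g * Nm 0 β w1' w2' h' v1' v2' g' := by
  obtain ⟨hx, hy, hr, hq, -, -, rfl, rfl, rfl, rfl, rfl, rfl, rfl, rfl, rfl, rfl, rfl, rfl,
    hM2, hK2, hS⟩ := H
  simp only [Dn, Nm]
  linear_combination (- 2 * β * J * x * y * M * K ^ 2 + 2 * β * J * x ^ 2 * K ^ 3 + 2 * β ^ 2 * J * K ^ 3
      - 2 * β ^ 2 * J * M * K ^ 2 + 2 * β ^ 2 * J * x * y * M * K ^ 2
      + 2 * β ^ 2 * J * x * z * y * u * M * K ^ 2 - 2 * β ^ 2 * J * x ^ 2 * K ^ 3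
      - 2 * β ^ 2 * J * x ^ 2 * z ^ 2 * K ^ 3 + 2 * β ^ 3 * J * z * u * M * K ^ 2
      - 2 * β ^ 3 * J * z ^ 2 * K ^ 3 - 4 * β ^ 3 * J * x * z * y * u * M * K ^ 2
      + 4 * β ^ 3 * J * x ^ 2 * z ^ 2 * K ^ 3 - 2 * β ^ 4 * J * z * u * M * K ^ 2
      + 2 * β ^ 4 * J * z ^ 2 * K ^ 3 + 2 * β ^ 4 * J * x * z * y * u * M * K ^ 2
      - 2 * β ^ 4 * J * x ^ 2 * z ^ 2 * K ^ 3) * hr +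
    (- 2 * β * J * y ^ 2 * M ^ 3 + 2 * β * J * x * y * M ^ 2 * K
      + 2 * β ^ 2 * J * M ^ 2 * K - 2 * β ^ 2 * J * M ^ 3 + 2 * β ^ 2 * J * y ^ 2 * M ^ 3
      + 2 * β ^ 2 * J * y ^ 2 * u ^ 2 * M ^ 3 - 2 * β ^ 2 * J * x * y * M ^ 2 * K
      - 2 * β ^ 2 * J * x * z * y * u * M ^ 2 * K + 2 * β ^ 3 * J * u ^ 2 * M ^ 3
      - 4 * β ^ 3 * J * y ^ 2 * u ^ 2 * M ^ 3 - 2 * β ^ 3 * J * z * u * M ^ 2 * K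
      + 4 * β ^ 3 * J * x * z * y * u * M ^ 2 * K - 2 * β ^ 4 * J * u ^ 2 * M ^ 3
      + 2 * β ^ 4 * J * y ^ 2 * u ^ 2 * M ^ 3 + 2 * β ^ 4 * J * z * u * M ^ 2 * K
      - 2 * β ^ 4 * J * x * z * y * u * M ^ 2 * K) * hq +
    (2 * β * J * M * K ^ 3 - 2 * β * J * r * q * M * K ^ 2 - 2 * β * J ^ 3 * K ^ 3
      - 2 * β ^ 2 * J * M * K ^ 3 + 2 * β ^ 2 * J * r * q * M * K ^ 2
      + 2 * β ^ 2 * J * z * r * u * q * M * K ^ 2 - 2 * β ^ 2 * J * z ^ 2 * M * K ^ 3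
      + 2 * β ^ 2 * J ^ 3 * K ^ 3 - 2 * β ^ 2 * J ^ 3 * z * u * M * K ^ 2
      + 2 * β ^ 2 * J ^ 3 * z ^ 2 * K ^ 3 + 2 * β ^ 2 * J ^ 3 * z ^ 2 * M * K ^ 2
      - 4 * β ^ 3 * J * z * r * u * q * M * K ^ 2 + 4 * β ^ 3 * J * z ^ 2 * M * K ^ 3
      + 4 * β ^ 3 * J ^ 3 * z * u * M * K ^ 2 - 4 * β ^ 3 * J ^ 3 * z ^ 2 * K ^ 3
      - 4 * β ^ 3 * J ^ 3 * z ^ 2 * M * K ^ 2 + 2 * β ^ 4 * J * z * r * u * q * M * K ^ 2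
      - 2 * β ^ 4 * J * z ^ 2 * M * K ^ 3 - 2 * β ^ 4 * J ^ 3 * z * u * M * K ^ 2
      + 2 * β ^ 4 * J ^ 3 * z ^ 2 * K ^ 3 + 2 * β ^ 4 * J ^ 3 * z ^ 2 * M * K ^ 2) * hx +
    (- 2 * β * J * M ^ 3 * K + 2 * β * J * r * q * M ^ 2 * K + 2 * β * J ^ 3 * M ^ 3
      + 2 * β ^ 2 * J * M ^ 3 * K + 2 * β ^ 2 * J * u ^ 2 * M ^ 3 * K
      - 2 * β ^ 2 * J * r * q * M ^ 2 * K - 2 * β ^ 2 * J * z * r * u * q * M ^ 2 * K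
      - 2 * β ^ 2 * J ^ 3 * M ^ 3 - 2 * β ^ 2 * J ^ 3 * u ^ 2 * M ^ 2 * K
      - 2 * β ^ 2 * J ^ 3 * u ^ 2 * M ^ 3 + 2 * β ^ 2 * J ^ 3 * z * u * M ^ 2 * K
      - 4 * β ^ 3 * J * u ^ 2 * M ^ 3 * K + 4 * β ^ 3 * J * z * r * u * q * M ^ 2 * K
      + 4 * β ^ 3 * J ^ 3 * u ^ 2 * M ^ 2 * K + 4 * β ^ 3 * J ^ 3 * u ^ 2 * M ^ 3
      - 4 * β ^ 3 * J ^ 3 * z * u * M ^ 2 * K + 2 * β ^ 4 * J * u ^ 2 * M ^ 3 * K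
      - 2 * β ^ 4 * J * z * r * u * q * M ^ 2 * K - 2 * β ^ 4 * J ^ 3 * u ^ 2 * M ^ 2 * K
      - 2 * β ^ 4 * J ^ 3 * u ^ 2 * M ^ 3 + 2 * β ^ 4 * J ^ 3 * z * u * M ^ 2 * K) * hy +
    (2 * β * J * M * K ^ 3 + 2 * β * J * M ^ 2 * K ^ 3 - 2 * β * J * r * q * M * K ^ 2
      - 2 * β * J * x * r * y * q * M * K ^ 2 - 2 * β * J ^ 3 * K ^ 3
      - 2 * β * J ^ 3 * M * K ^ 3 - 2 * β * J ^ 3 * M ^ 2 * K ^ 2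
      + 2 * β * J ^ 3 * x * y * M * K ^ 2 - 2 * β ^ 2 * J * r * q * M * K ^ 2
      + 2 * β ^ 2 * J * z * r * u * q * M * K ^ 2 - 2 * β ^ 2 * J * z ^ 2 * M * K ^ 3
      + 2 * β ^ 2 * J * x * r * y * q * M * K ^ 2 + 2 * β ^ 2 * J ^ 3 * M * K ^ 2
      - 2 * β ^ 2 * J ^ 3 * z * u * M * K ^ 2 + 2 * β ^ 2 * J ^ 3 * z ^ 2 * K ^ 3
      + 2 * β ^ 2 * J ^ 3 * z ^ 2 * M * K ^ 2 - 2 * β ^ 2 * J ^ 3 * x * y * M * K ^ 2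
      - 2 * β ^ 3 * J * z * r * u * q * M * K ^ 2 + 2 * β ^ 3 * J * z ^ 2 * M * K ^ 3
      + 2 * β ^ 3 * J ^ 3 * z * u * M * K ^ 2 - 2 * β ^ 3 * J ^ 3 * z ^ 2 * K ^ 3
      - 2 * β ^ 3 * J ^ 3 * z ^ 2 * M * K ^ 2) * hM2 +
    (- 2 * β * J * M ^ 3 * K - 2 * β * J * M ^ 3 * K ^ 2 + 2 * β * J * r * q * M ^ 2 * K
      + 2 * β * J * x * r * y * q * M ^ 2 * K + 2 * β * J ^ 3 * M ^ 2 * K ^ 2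
      + 2 * β * J ^ 3 * M ^ 3 + 2 * β * J ^ 3 * M ^ 3 * K
      - 2 * β * J ^ 3 * x * y * M ^ 2 * K + 2 * β ^ 2 * J * u ^ 2 * M ^ 3 * K
      + 2 * β ^ 2 * J * r * q * M ^ 2 * K - 2 * β ^ 2 * J * z * r * u * q * M ^ 2 * K
      - 2 * β ^ 2 * J * x * r * y * q * M ^ 2 * K - 2 * β ^ 2 * J ^ 3 * M ^ 2 * K
      - 2 * β ^ 2 * J ^ 3 * u ^ 2 * M ^ 2 * K - 2 * β ^ 2 * J ^ 3 * u ^ 2 * M ^ 3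
      + 2 * β ^ 2 * J ^ 3 * z * u * M ^ 2 * K + 2 * β ^ 2 * J ^ 3 * x * y * M ^ 2 * K
      - 2 * β ^ 3 * J * u ^ 2 * M ^ 3 * K + 2 * β ^ 3 * J * z * r * u * q * M ^ 2 * K
      + 2 * β ^ 3 * J ^ 3 * u ^ 2 * M ^ 2 * K + 2 * β ^ 3 * J ^ 3 * u ^ 2 * M ^ 3
      - 2 * β ^ 3 * J ^ 3 * z * u * M ^ 2 * K) * hK2

set_option maxHeartbeats 4000000 in
lemma key01 (H : KeyHyp β J x z r y u q M K w1 w2 h v1 v2 g w1' w2' h' v1' v2' g') :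
    Dn 0 β w1 w2 h v1 v2 g * Dn 1 β w1' w2' h' v1' v2' g' * (2 * J * (K - M)) =
      Nm 0 β w1 w2 h v1 v2 g * Dn 1 β w1' w2' h' v1' v2' g' -
      Dn 0 β w1 w2 h v1 v2 g * Nm 1 β w1' w2' h' v1' v2' g' := by
  obtain ⟨hx, hy, hr, hq, -, -, rfl, rfl, rfl, rfl, rfl, rfl, rfl, rfl, rfl, rfl, rfl, rfl,
    hM2, hK2, hS⟩ := H
  simp only [Dn, Nm]
  linear_combination (- β * y * q * M * K ^ 2 + β * x * r * K ^ 3 + 2 * β * J * x * y * u * M * K ^ 2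
      - 2 * β * J * x * z * y * M * K ^ 2 + β ^ 2 * z ^ 2 * y * q * M * K ^ 2
      - β ^ 2 * x * z ^ 2 * r * K ^ 3 + β ^ 2 * J * u * M * K ^ 2 + β ^ 2 * J * z * K ^ 3
      - 2 * β ^ 2 * J * z * M * K ^ 2 - 2 * β ^ 2 * J * x * y * u * M * K ^ 2
      + 2 * β ^ 2 * J * x * z * y * M * K ^ 2 - β ^ 3 * z ^ 2 * y * q * M * K ^ 2
      + β ^ 3 * x * z ^ 2 * r * K ^ 3 + β ^ 3 * J * z ^ 2 * u * M * K ^ 2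
      - β ^ 3 * J * z ^ 3 * K ^ 3 - β ^ 4 * J * z ^ 2 * u * M * K ^ 2
      + β ^ 4 * J * z ^ 3 * K ^ 3) * hr +
    (β * y * q * M ^ 3 - β * x * r * M ^ 2 * K - 2 * β * J * x * y * u * M ^ 2 * K
      + 2 * β * J * x * z * y * M ^ 2 * K - β ^ 2 * y * u ^ 2 * q * M ^ 3
      + β ^ 2 * x * r * u ^ 2 * M ^ 2 * K - 2 * β ^ 2 * J * u * M ^ 2 * K
      + β ^ 2 * J * u * M ^ 3 + β ^ 2 * J * z * M ^ 2 * K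
      + 2 * β ^ 2 * J * x * y * u * M ^ 2 * K - 2 * β ^ 2 * J * x * z * y * M ^ 2 * K
      + β ^ 3 * y * u ^ 2 * q * M ^ 3 - β ^ 3 * x * r * u ^ 2 * M ^ 2 * K
      - β ^ 3 * J * u ^ 3 * M ^ 3 + β ^ 3 * J * z * u ^ 2 * M ^ 2 * K
      + β ^ 4 * J * u ^ 3 * M ^ 3 - β ^ 4 * J * z * u ^ 2 * M ^ 2 * K) * hq +
    (- J ^ 2 * y * q * M * K ^ 2 + J ^ 2 * x * r * K ^ 3
      + 2 * β * J * r * u * q * M * K ^ 2 - 2 * β * J * z * r * q * M * K ^ 2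
      + β * J ^ 2 * y * q * M * K ^ 2 + β * J ^ 2 * z ^ 2 * y * q * M * K ^ 2
      - β * J ^ 2 * x * r * K ^ 3 - β * J ^ 2 * x * z ^ 2 * r * K ^ 3
      - β * J ^ 3 * u * M * K ^ 2 - β * J ^ 3 * z * K ^ 3 + 2 * β * J ^ 3 * z * M * K ^ 2
      - 2 * β ^ 2 * J * r * u * q * M * K ^ 2 + 2 * β ^ 2 * J * z * r * q * M * K ^ 2
      - 2 * β ^ 2 * J ^ 2 * z ^ 2 * y * q * M * K ^ 2
      + 2 * β ^ 2 * J ^ 2 * x * z ^ 2 * r * K ^ 3 + β ^ 2 * J ^ 3 * u * M * K ^ 2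
      + β ^ 2 * J ^ 3 * z * K ^ 3 - 2 * β ^ 2 * J ^ 3 * z * M * K ^ 2
      - β ^ 2 * J ^ 3 * z ^ 2 * u * M * K ^ 2 + β ^ 2 * J ^ 3 * z ^ 3 * K ^ 3
      + β ^ 3 * J ^ 2 * z ^ 2 * y * q * M * K ^ 2 - β ^ 3 * J ^ 2 * x * z ^ 2 * r * K ^ 3
      + 2 * β ^ 3 * J ^ 3 * z ^ 2 * u * M * K ^ 2 - 2 * β ^ 3 * J ^ 3 * z ^ 3 * K ^ 3
      - β ^ 4 * J ^ 3 * z ^ 2 * u * M * K ^ 2 + β ^ 4 * J ^ 3 * z ^ 3 * K ^ 3) * hx +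
    (J ^ 2 * y * q * M ^ 3 - J ^ 2 * x * r * M ^ 2 * K
      - 2 * β * J * r * u * q * M ^ 2 * K + 2 * β * J * z * r * q * M ^ 2 * K
      - β * J ^ 2 * y * q * M ^ 3 - β * J ^ 2 * y * u ^ 2 * q * M ^ 3
      + β * J ^ 2 * x * r * M ^ 2 * K + β * J ^ 2 * x * r * u ^ 2 * M ^ 2 * K
      + 2 * β * J ^ 3 * u * M ^ 2 * K - β * J ^ 3 * u * M ^ 3 - β * J ^ 3 * z * M ^ 2 * K
      + 2 * β ^ 2 * J * r * u * q * M ^ 2 * K - 2 * β ^ 2 * J * z * r * q * M ^ 2 * K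
      + 2 * β ^ 2 * J ^ 2 * y * u ^ 2 * q * M ^ 3
      - 2 * β ^ 2 * J ^ 2 * x * r * u ^ 2 * M ^ 2 * K - 2 * β ^ 2 * J ^ 3 * u * M ^ 2 * K
      + β ^ 2 * J ^ 3 * u * M ^ 3 + β ^ 2 * J ^ 3 * u ^ 3 * M ^ 3
      + β ^ 2 * J ^ 3 * z * M ^ 2 * K - β ^ 2 * J ^ 3 * z * u ^ 2 * M ^ 2 * K
      - β ^ 3 * J ^ 2 * y * u ^ 2 * q * M ^ 3 + β ^ 3 * J ^ 2 * x * r * u ^ 2 * M ^ 2 * K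
      - 2 * β ^ 3 * J ^ 3 * u ^ 3 * M ^ 3 + 2 * β ^ 3 * J ^ 3 * z * u ^ 2 * M ^ 2 * K
      + β ^ 4 * J ^ 3 * u ^ 3 * M ^ 3 - β ^ 4 * J ^ 3 * z * u ^ 2 * M ^ 2 * K) * hy +
    (- J ^ 2 * y * q * M * K ^ 2 - J ^ 2 * y * q * M ^ 2 * K ^ 2 + J ^ 2 * x * r * K ^ 3
      + J ^ 2 * x * r * M * K ^ 3 - β * y * q * M ^ 2 * K ^ 2 + β * x * r * M * K ^ 3
      + 2 * β * J * r * u * q * M * K ^ 2 - 2 * β * J * z * r * q * M * K ^ 2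
      + 2 * β * J ^ 2 * y * q * M * K ^ 2 + 2 * β * J ^ 2 * r * y * M * K ^ 2
      + β * J ^ 2 * z ^ 2 * y * q * M * K ^ 2 - 2 * β * J ^ 2 * x * q * M * K ^ 2
      - 2 * β * J ^ 2 * x * r * M * K ^ 2 - β * J ^ 2 * x * z ^ 2 * r * K ^ 3
      - β * J ^ 3 * u * M * K ^ 2 + β * J ^ 3 * u * M ^ 2 * K ^ 2 - β * J ^ 3 * z * K ^ 3
      + 2 * β * J ^ 3 * z * M * K ^ 2 - β * J ^ 3 * z * M * K ^ 3
      - β ^ 2 * J * u * M ^ 2 * K ^ 2 + β ^ 2 * J * z * M * K ^ 3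
      - β ^ 2 * J ^ 2 * z ^ 2 * y * q * M * K ^ 2 + β ^ 2 * J ^ 2 * x * z ^ 2 * r * K ^ 3
      - β ^ 2 * J ^ 3 * z ^ 2 * u * M * K ^ 2 + β ^ 2 * J ^ 3 * z ^ 3 * K ^ 3
      + β ^ 3 * J ^ 3 * z ^ 2 * u * M * K ^ 2 - β ^ 3 * J ^ 3 * z ^ 3 * K ^ 3) * hM2 +
    (J ^ 2 * y * q * M ^ 3 + J ^ 2 * y * q * M ^ 3 * K - J ^ 2 * x * r * M ^ 2 * K
      - J ^ 2 * x * r * M ^ 2 * K ^ 2 + β * y * q * M ^ 3 * K - β * x * r * M ^ 2 * K ^ 2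
      - 2 * β * J * r * u * q * M ^ 2 * K + 2 * β * J * z * r * q * M ^ 2 * K
      - 2 * β * J ^ 2 * y * q * M ^ 2 * K - β * J ^ 2 * y * u ^ 2 * q * M ^ 3
      - 2 * β * J ^ 2 * r * y * M ^ 2 * K + 2 * β * J ^ 2 * x * q * M ^ 2 * K
      + 2 * β * J ^ 2 * x * r * M ^ 2 * K + β * J ^ 2 * x * r * u ^ 2 * M ^ 2 * K
      + 2 * β * J ^ 3 * u * M ^ 2 * K - β * J ^ 3 * u * M ^ 3 - β * J ^ 3 * u * M ^ 3 * K
      - β * J ^ 3 * z * M ^ 2 * K + β * J ^ 3 * z * M ^ 2 * K ^ 2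
      + β ^ 2 * J * u * M ^ 3 * K - β ^ 2 * J * z * M ^ 2 * K ^ 2
      + β ^ 2 * J ^ 2 * y * u ^ 2 * q * M ^ 3 - β ^ 2 * J ^ 2 * x * r * u ^ 2 * M ^ 2 * K
      + β ^ 2 * J ^ 3 * u ^ 3 * M ^ 3 - β ^ 2 * J ^ 3 * z * u ^ 2 * M ^ 2 * K
      - β ^ 3 * J ^ 3 * u ^ 3 * M ^ 3 + β ^ 3 * J ^ 3 * z * u ^ 2 * M ^ 2 * K) * hK2

set_option maxHeartbeats 4000000 in
lemma key02 (H : KeyHyp β J x z r y u q M K w1 w2 h v1 v2 g w1' w2' h' v1' v2' g') :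
    Dn 0 β w1 w2 h v1 v2 g * Dn 2 β w1' w2' h' v1' v2' g' * (2 * J * (K - M)) =
      Nm 0 β w1 w2 h v1 v2 g * Dn 2 β w1' w2' h' v1' v2' g' -
      Dn 0 β w1 w2 h v1 v2 g * Nm 2 β w1' w2' h' v1' v2' g' := by
  obtain ⟨hx, hy, hr, hq, -, -, rfl, rfl, rfl, rfl, rfl, rfl, rfl, rfl, rfl, rfl, rfl, rfl,
    hM2, hK2, hS⟩ := H
  simp only [Dn, Nm]
  linear_combination (J * x ^ 2 * y * M * K ^ 2 - J * x ^ 3 * K ^ 3 - β * x ^ 2 * u * q * M * K ^ 2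
      + β * x ^ 2 * z * r * K ^ 3 - β * J * y * M * K ^ 2 - β * J * x * K ^ 3
      + 2 * β * J * x * M * K ^ 2 - β * J * x ^ 2 * y * M * K ^ 2 + β * J * x ^ 3 * K ^ 3
      - β ^ 2 * u * q * M * K ^ 2 + β ^ 2 * z * r * K ^ 3
      + β ^ 2 * x ^ 2 * u * q * M * K ^ 2 - β ^ 2 * x ^ 2 * z * r * K ^ 3
      + 2 * β ^ 2 * J * z * y * u * M * K ^ 2 - 2 * β ^ 2 * J * x * z * u * M * K ^ 2
      - 2 * β ^ 3 * J * z * y * u * M * K ^ 2 + 2 * β ^ 3 * J * x * z * u * M * K ^ 2) * hr +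
    (- J * y ^ 3 * M ^ 3 + J * x * y ^ 2 * M ^ 2 * K + β * y ^ 2 * u * q * M ^ 3
      - β * z * r * y ^ 2 * M ^ 2 * K + 2 * β * J * y * M ^ 2 * K - β * J * y * M ^ 3
      + β * J * y ^ 3 * M ^ 3 - β * J * x * M ^ 2 * K - β * J * x * y ^ 2 * M ^ 2 * K
      + β ^ 2 * u * q * M ^ 3 - β ^ 2 * y ^ 2 * u * q * M ^ 3 - β ^ 2 * z * r * M ^ 2 * K
      + β ^ 2 * z * r * y ^ 2 * M ^ 2 * K - 2 * β ^ 2 * J * z * y * u * M ^ 2 * K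
      + 2 * β ^ 2 * J * x * z * u * M ^ 2 * K + 2 * β ^ 3 * J * z * y * u * M ^ 2 * K
      - 2 * β ^ 3 * J * x * z * u * M ^ 2 * K) * hq +
    (J * y * M ^ 2 * K ^ 2 - J * x * M * K ^ 3 - J ^ 3 * y * M * K ^ 2
      + J ^ 3 * x * K ^ 3 - β * u * q * M ^ 2 * K ^ 2 + β * z * r * M * K ^ 3
      - β * J * y * M ^ 2 * K ^ 2 + β * J * x * M * K ^ 3 + β * J ^ 2 * u * q * M * K ^ 2
      + 2 * β * J ^ 2 * r * u * M * K ^ 2 - 2 * β * J ^ 2 * z * q * M * K ^ 2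
      + β * J ^ 2 * z * r * K ^ 3 - 2 * β * J ^ 2 * z * r * M * K ^ 2
      + β * J ^ 3 * y * M * K ^ 2 + β * J ^ 3 * z ^ 2 * y * M * K ^ 2
      - β * J ^ 3 * x * K ^ 3 - β * J ^ 3 * x * z ^ 2 * K ^ 3
      + β ^ 2 * u * q * M ^ 2 * K ^ 2 - β ^ 2 * z * r * M * K ^ 3
      - β ^ 2 * J ^ 2 * u * q * M * K ^ 2 - 2 * β ^ 2 * J ^ 2 * r * u * M * K ^ 2
      + 2 * β ^ 2 * J ^ 2 * z * q * M * K ^ 2 - β ^ 2 * J ^ 2 * z * r * K ^ 3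
      + 2 * β ^ 2 * J ^ 2 * z * r * M * K ^ 2 + β ^ 2 * J ^ 2 * z ^ 2 * u * q * M * K ^ 2
      - β ^ 2 * J ^ 2 * z ^ 3 * r * K ^ 3 - 2 * β ^ 2 * J ^ 3 * z ^ 2 * y * M * K ^ 2
      + 2 * β ^ 2 * J ^ 3 * x * z ^ 2 * K ^ 3
      - 2 * β ^ 3 * J ^ 2 * z ^ 2 * u * q * M * K ^ 2
      + 2 * β ^ 3 * J ^ 2 * z ^ 3 * r * K ^ 3 + β ^ 3 * J ^ 3 * z ^ 2 * y * M * K ^ 2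
      - β ^ 3 * J ^ 3 * x * z ^ 2 * K ^ 3 + β ^ 4 * J ^ 2 * z ^ 2 * u * q * M * K ^ 2
      - β ^ 4 * J ^ 2 * z ^ 3 * r * K ^ 3) * hx +
    (- J * y * M ^ 3 * K + J * x * M ^ 2 * K ^ 2 + J ^ 3 * y * M ^ 3
      - J ^ 3 * x * M ^ 2 * K + β * u * q * M ^ 3 * K - β * z * r * M ^ 2 * K ^ 2
      + β * J * y * M ^ 3 * K - β * J * x * M ^ 2 * K ^ 2
      - 2 * β * J ^ 2 * u * q * M ^ 2 * K + β * J ^ 2 * u * q * M ^ 3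
      - 2 * β * J ^ 2 * r * u * M ^ 2 * K + 2 * β * J ^ 2 * z * q * M ^ 2 * K
      + β * J ^ 2 * z * r * M ^ 2 * K - β * J ^ 3 * y * M ^ 3
      - β * J ^ 3 * y * u ^ 2 * M ^ 3 + β * J ^ 3 * x * M ^ 2 * K
      + β * J ^ 3 * x * u ^ 2 * M ^ 2 * K - β ^ 2 * u * q * M ^ 3 * K
      + β ^ 2 * z * r * M ^ 2 * K ^ 2 + 2 * β ^ 2 * J ^ 2 * u * q * M ^ 2 * K
      - β ^ 2 * J ^ 2 * u * q * M ^ 3 - β ^ 2 * J ^ 2 * u ^ 3 * q * M ^ 3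
      + 2 * β ^ 2 * J ^ 2 * r * u * M ^ 2 * K - 2 * β ^ 2 * J ^ 2 * z * q * M ^ 2 * K
      - β ^ 2 * J ^ 2 * z * r * M ^ 2 * K + β ^ 2 * J ^ 2 * z * r * u ^ 2 * M ^ 2 * K
      + 2 * β ^ 2 * J ^ 3 * y * u ^ 2 * M ^ 3 - 2 * β ^ 2 * J ^ 3 * x * u ^ 2 * M ^ 2 * K
      + 2 * β ^ 3 * J ^ 2 * u ^ 3 * q * M ^ 3
      - 2 * β ^ 3 * J ^ 2 * z * r * u ^ 2 * M ^ 2 * K - β ^ 3 * J ^ 3 * y * u ^ 2 * M ^ 3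
      + β ^ 3 * J ^ 3 * x * u ^ 2 * M ^ 2 * K - β ^ 4 * J ^ 2 * u ^ 3 * q * M ^ 3
      + β ^ 4 * J ^ 2 * z * r * u ^ 2 * M ^ 2 * K) * hy +
    (J * y * M ^ 2 * K ^ 2 - J * x * M * K ^ 3 - J ^ 3 * y * M * K ^ 2
      - J ^ 3 * y * M ^ 2 * K ^ 2 + J ^ 3 * x * K ^ 3 + J ^ 3 * x * M * K ^ 3
      - β * u * q * M ^ 2 * K ^ 2 + β * z * r * M * K ^ 3
      - 2 * β * J * r * y * q * M * K ^ 2 + 2 * β * J * x * r * q * M * K ^ 2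
      + β * J ^ 2 * u * q * M * K ^ 2 - β * J ^ 2 * u * q * M ^ 2 * K ^ 2
      + 2 * β * J ^ 2 * r * u * M * K ^ 2 - 2 * β * J ^ 2 * z * q * M * K ^ 2
      + β * J ^ 2 * z * r * K ^ 3 - 2 * β * J ^ 2 * z * r * M * K ^ 2
      + β * J ^ 2 * z * r * M * K ^ 3 + 2 * β * J ^ 3 * y * M * K ^ 2
      + β * J ^ 3 * z ^ 2 * y * M * K ^ 2 - 2 * β * J ^ 3 * x * M * K ^ 2
      - β * J ^ 3 * x * z ^ 2 * K ^ 3 + β ^ 2 * J ^ 2 * z ^ 2 * u * q * M * K ^ 2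
      - β ^ 2 * J ^ 2 * z ^ 3 * r * K ^ 3 - β ^ 2 * J ^ 3 * z ^ 2 * y * M * K ^ 2
      + β ^ 2 * J ^ 3 * x * z ^ 2 * K ^ 3 - β ^ 3 * J ^ 2 * z ^ 2 * u * q * M * K ^ 2
      + β ^ 3 * J ^ 2 * z ^ 3 * r * K ^ 3) * hM2 +
    (- J * y * M ^ 3 * K + J * x * M ^ 2 * K ^ 2 + J ^ 3 * y * M ^ 3
      + J ^ 3 * y * M ^ 3 * K - J ^ 3 * x * M ^ 2 * K - J ^ 3 * x * M ^ 2 * K ^ 2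
      + β * u * q * M ^ 3 * K - β * z * r * M ^ 2 * K ^ 2
      + 2 * β * J * r * y * q * M ^ 2 * K - 2 * β * J * x * r * q * M ^ 2 * K
      - 2 * β * J ^ 2 * u * q * M ^ 2 * K + β * J ^ 2 * u * q * M ^ 3
      + β * J ^ 2 * u * q * M ^ 3 * K - 2 * β * J ^ 2 * r * u * M ^ 2 * K
      + 2 * β * J ^ 2 * z * q * M ^ 2 * K + β * J ^ 2 * z * r * M ^ 2 * K
      - β * J ^ 2 * z * r * M ^ 2 * K ^ 2 - 2 * β * J ^ 3 * y * M ^ 2 * K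
      - β * J ^ 3 * y * u ^ 2 * M ^ 3 + 2 * β * J ^ 3 * x * M ^ 2 * K
      + β * J ^ 3 * x * u ^ 2 * M ^ 2 * K - β ^ 2 * J ^ 2 * u ^ 3 * q * M ^ 3
      + β ^ 2 * J ^ 2 * z * r * u ^ 2 * M ^ 2 * K + β ^ 2 * J ^ 3 * y * u ^ 2 * M ^ 3
      - β ^ 2 * J ^ 3 * x * u ^ 2 * M ^ 2 * K + β ^ 3 * J ^ 2 * u ^ 3 * q * M ^ 3
      - β ^ 3 * J ^ 2 * z * r * u ^ 2 * M ^ 2 * K) * hK2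

set_option maxHeartbeats 4000000 in
lemma key11 (H : KeyHyp β J x z r y u q M K w1 w2 h v1 v2 g w1' w2' h' v1' v2' g') :
    Dn 1 β w1 w2 h v1 v2 g * Dn 1 β w1' w2' h' v1' v2' g' * (2 * J * (K - M)) =
      Nm 1 β w1 w2 h v1 v2 g * Dn 1 β w1' w2' h' v1' v2' g' -
      Dn 1 β w1 w2 h v1 v2 g * Nm 1 β w1' w2' h' v1' v2' g' := by
  obtain ⟨hx, hy, hr, hq, -, -, rfl, rfl, rfl, rfl, rfl, rfl, rfl, rfl, rfl, rfl, rfl, rfl,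
    hM2, hK2, hS⟩ := H
  simp only [Dn, Nm]
  linear_combination (- 2 * J * x * y * M * K ^ 2 - 2 * J * x ^ 2 * K ^ 3
      + 2 * β * J * x * z * y * u * M * K ^ 2 + 2 * β * J * x ^ 2 * z ^ 2 * K ^ 3
      + 2 * β ^ 2 * J * z * u * M * K ^ 2 - 2 * β ^ 2 * J * z ^ 2 * M * K ^ 2
      - 2 * β ^ 2 * J * x * z * y * u * M * K ^ 2 - 2 * β ^ 2 * J * x ^ 2 * z ^ 2 * K ^ 3) * hr +
    (2 * J * y ^ 2 * M ^ 3 + 2 * J * x * y * M ^ 2 * K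
      - 2 * β * J * y ^ 2 * u ^ 2 * M ^ 3 - 2 * β * J * x * z * y * u * M ^ 2 * K
      + 2 * β ^ 2 * J * u ^ 2 * M ^ 2 * K + 2 * β ^ 2 * J * y ^ 2 * u ^ 2 * M ^ 3
      - 2 * β ^ 2 * J * z * u * M ^ 2 * K + 2 * β ^ 2 * J * x * z * y * u * M ^ 2 * K) * hq +
    (- 2 * J * M * K ^ 3 - 2 * J * r * q * M * K ^ 2 + 2 * J ^ 3 * M * K ^ 2
      + 2 * β * J * z * r * u * q * M * K ^ 2 + 2 * β * J * z ^ 2 * M * K ^ 3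
      - 2 * β * J ^ 3 * z * u * M * K ^ 2 - 2 * β ^ 2 * J * z * r * u * q * M * K ^ 2
      - 2 * β ^ 2 * J * z ^ 2 * M * K ^ 3 + 2 * β ^ 2 * J ^ 3 * z * u * M * K ^ 2) * hx +
    (2 * J * M ^ 3 * K + 2 * J * r * q * M ^ 2 * K - 2 * J ^ 3 * M ^ 2 * K
      - 2 * β * J * u ^ 2 * M ^ 3 * K - 2 * β * J * z * r * u * q * M ^ 2 * K
      + 2 * β * J ^ 3 * z * u * M ^ 2 * K + 2 * β ^ 2 * J * u ^ 2 * M ^ 3 * K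
      + 2 * β ^ 2 * J * z * r * u * q * M ^ 2 * K - 2 * β ^ 2 * J ^ 3 * z * u * M ^ 2 * K) * hy +
    (- 2 * J * M * K ^ 3 - 2 * J * M ^ 2 * K ^ 2 - 2 * J * r * q * M * K ^ 2
      + 2 * J * x * r * y * q * M * K ^ 2 + 2 * J ^ 3 * M * K ^ 2
      - 2 * J ^ 3 * x * y * M * K ^ 2 + 2 * β * J * z * r * u * q * M * K ^ 2
      + 2 * β * J * z ^ 2 * M * K ^ 3 - 2 * β * J ^ 3 * z * u * M * K ^ 2) * hM2 +
    (2 * J * M ^ 2 * K ^ 2 + 2 * J * M ^ 3 * K + 2 * J * r * q * M ^ 2 * K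
      - 2 * J * x * r * y * q * M ^ 2 * K - 2 * J ^ 3 * M ^ 2 * K
      + 2 * J ^ 3 * x * y * M ^ 2 * K - 2 * β * J * u ^ 2 * M ^ 3 * K
      - 2 * β * J * z * r * u * q * M ^ 2 * K + 2 * β * J ^ 3 * z * u * M ^ 2 * K) * hK2 +
    (2 * β * J * M ^ 2 * K ^ 2) * hS

set_option maxHeartbeats 4000000 in
lemma key12 (H : KeyHyp β J x z r y u q M K w1 w2 h v1 v2 g w1' w2' h' v1' v2' g') :
    Dn 1 β w1 w2 h v1 v2 g * Dn 2 β w1' w2' h' v1' v2' g' * (2 * J * (K - M)) =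
      Nm 1 β w1 w2 h v1 v2 g * Dn 2 β w1' w2' h' v1' v2' g' -
      Dn 1 β w1 w2 h v1 v2 g * Nm 2 β w1' w2' h' v1' v2' g' := by
  obtain ⟨hx, hy, hr, hq, -, -, rfl, rfl, rfl, rfl, rfl, rfl, rfl, rfl, rfl, rfl, rfl, rfl,
    hM2, hK2, hS⟩ := H
  simp only [Dn, Nm]
  linear_combination (x ^ 2 * q * M * K ^ 2 + x ^ 2 * r * K ^ 3 - J * x ^ 2 * y * u * M * K ^ 2
      - J * x ^ 3 * z * K ^ 3 - 2 * β * J * z * y * M * K ^ 2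
      - 2 * β * J * x * u * M * K ^ 2 - 2 * β * J * x * z * K ^ 3
      + 2 * β * J * x * z * M * K ^ 2 + β * J * x ^ 2 * y * u * M * K ^ 2
      + β * J * x ^ 3 * z * K ^ 3 + β ^ 2 * z ^ 2 * q * M * K ^ 2
      + β ^ 2 * z ^ 2 * r * K ^ 3 + β ^ 2 * J * z ^ 2 * y * u * M * K ^ 2
      + β ^ 2 * J * x * z ^ 3 * K ^ 3 - β ^ 3 * J * z ^ 2 * y * u * M * K ^ 2
      - β ^ 3 * J * x * z ^ 3 * K ^ 3) * hr +
    (- y ^ 2 * q * M ^ 3 - r * y ^ 2 * M ^ 2 * K + J * y ^ 3 * u * M ^ 3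
      + J * x * z * y ^ 2 * M ^ 2 * K - 2 * β * J * y * u * M ^ 2 * K
      + 2 * β * J * y * u * M ^ 3 - β * J * y ^ 3 * u * M ^ 3
      + 2 * β * J * z * y * M ^ 2 * K + 2 * β * J * x * u * M ^ 2 * K
      - β * J * x * z * y ^ 2 * M ^ 2 * K - β ^ 2 * u ^ 2 * q * M ^ 3
      - β ^ 2 * r * u ^ 2 * M ^ 2 * K - β ^ 2 * J * y * u ^ 3 * M ^ 3
      - β ^ 2 * J * x * z * u ^ 2 * M ^ 2 * K + β ^ 3 * J * y * u ^ 3 * M ^ 3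
      + β ^ 3 * J * x * z * u ^ 2 * M ^ 2 * K) * hq +
    (q * M ^ 2 * K ^ 2 + r * M * K ^ 3 - J * y * u * M ^ 2 * K ^ 2
      - J * x * z * M * K ^ 3 - 2 * J ^ 2 * q * M * K ^ 2 - 2 * J ^ 2 * r * M * K ^ 2
      + β * J * y * u * M ^ 2 * K ^ 2 + β * J * x * z * M * K ^ 3
      + 2 * β * J ^ 2 * z * u * q * M * K ^ 2 + 2 * β * J ^ 2 * z * r * u * M * K ^ 2
      - 2 * β ^ 2 * J ^ 2 * z * u * q * M * K ^ 2
      - 2 * β ^ 2 * J ^ 2 * z * r * u * M * K ^ 2) * hx +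
    (- q * M ^ 3 * K - r * M ^ 2 * K ^ 2 + J * y * u * M ^ 3 * K
      + J * x * z * M ^ 2 * K ^ 2 + 2 * J ^ 2 * q * M ^ 2 * K + 2 * J ^ 2 * r * M ^ 2 * K
      - β * J * y * u * M ^ 3 * K - β * J * x * z * M ^ 2 * K ^ 2
      - 2 * β * J ^ 2 * z * u * q * M ^ 2 * K - 2 * β * J ^ 2 * z * r * u * M ^ 2 * K
      + 2 * β ^ 2 * J ^ 2 * z * u * q * M ^ 2 * K
      + 2 * β ^ 2 * J ^ 2 * z * r * u * M ^ 2 * K) * hy +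
    (q * M ^ 2 * K ^ 2 + r * M * K ^ 3 - J * y * u * M ^ 2 * K ^ 2
      - J * x * z * M * K ^ 3 - 2 * J ^ 2 * q * M * K ^ 2 - 2 * J ^ 2 * r * M * K ^ 2
      + 2 * J ^ 2 * x * y * q * M * K ^ 2 + 2 * J ^ 2 * x * r * y * M * K ^ 2
      - β * J * y * u * M ^ 2 * K ^ 2 - β * J * x * z * M * K ^ 3
      + 2 * β * J ^ 2 * z * u * q * M * K ^ 2 + 2 * β * J ^ 2 * z * r * u * M * K ^ 2) * hM2 +
    (- q * M ^ 3 * K - r * M ^ 2 * K ^ 2 + J * y * u * M ^ 3 * K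
      + J * x * z * M ^ 2 * K ^ 2 + 2 * J ^ 2 * q * M ^ 2 * K + 2 * J ^ 2 * r * M ^ 2 * K
      - 2 * J ^ 2 * x * y * q * M ^ 2 * K - 2 * J ^ 2 * x * r * y * M ^ 2 * K
      + β * J * y * u * M ^ 3 * K + β * J * x * z * M ^ 2 * K ^ 2
      - 2 * β * J ^ 2 * z * u * q * M ^ 2 * K - 2 * β * J ^ 2 * z * r * u * M ^ 2 * K) * hK2

set_option maxHeartbeats 4000000 in
lemma key22 (H : KeyHyp β J x z r y u q M K w1 w2 h v1 v2 g w1' w2' h' v1' v2' g') :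
    Dn 2 β w1 w2 h v1 v2 g * Dn 2 β w1' w2' h' v1' v2' g' * (2 * J * (K - M)) =
      Nm 2 β w1 w2 h v1 v2 g * Dn 2 β w1' w2' h' v1' v2' g' -
      Dn 2 β w1 w2 h v1 v2 g * Nm 2 β w1' w2' h' v1' v2' g' := by
  obtain ⟨hx, hy, hr, hq, -, -, rfl, rfl, rfl, rfl, rfl, rfl, rfl, rfl, rfl, rfl, rfl, rfl,
    hM2, hK2, hS⟩ := H
  simp only [Dn, Nm]
  linear_combination (2 * J * x * y * M * K ^ 2 - 2 * J * x ^ 2 * M * K ^ 2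
      - 2 * β * J * x * z * y * u * M * K ^ 2 - 2 * β * J * x ^ 2 * z ^ 2 * K ^ 3
      - 2 * β ^ 2 * J * z * u * M * K ^ 2 - 2 * β ^ 2 * J * z ^ 2 * K ^ 3
      + 2 * β ^ 2 * J * x * z * y * u * M * K ^ 2 + 2 * β ^ 2 * J * x ^ 2 * z ^ 2 * K ^ 3) * hr +
    (2 * J * y ^ 2 * M ^ 2 * K - 2 * J * x * y * M ^ 2 * K
      + 2 * β * J * y ^ 2 * u ^ 2 * M ^ 3 + 2 * β * J * x * z * y * u * M ^ 2 * K
      + 2 * β ^ 2 * J * u ^ 2 * M ^ 3 - 2 * β ^ 2 * J * y ^ 2 * u ^ 2 * M ^ 3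
      + 2 * β ^ 2 * J * z * u * M ^ 2 * K - 2 * β ^ 2 * J * x * z * y * u * M ^ 2 * K) * hq +
    (- 2 * J * M ^ 2 * K ^ 2 - 2 * J * r * q * M * K ^ 2 + 2 * J ^ 3 * M * K ^ 2
      + 2 * β * J * z * r * u * q * M * K ^ 2 - 2 * β * J * z ^ 2 * M * K ^ 3
      - 2 * β * J ^ 3 * z * u * M * K ^ 2 - 2 * β ^ 2 * J * z * r * u * q * M * K ^ 2
      + 2 * β ^ 2 * J * z ^ 2 * M * K ^ 3 + 2 * β ^ 2 * J ^ 3 * z * u * M * K ^ 2) * hx +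
    (2 * J * M ^ 2 * K ^ 2 + 2 * J * r * q * M ^ 2 * K - 2 * J ^ 3 * M ^ 2 * K
      + 2 * β * J * u ^ 2 * M ^ 3 * K - 2 * β * J * z * r * u * q * M ^ 2 * K
      + 2 * β * J ^ 3 * z * u * M ^ 2 * K - 2 * β ^ 2 * J * u ^ 2 * M ^ 3 * K
      + 2 * β ^ 2 * J * z * r * u * q * M ^ 2 * K - 2 * β ^ 2 * J ^ 3 * z * u * M ^ 2 * K) * hy +
    (- 2 * J * r * q * M * K ^ 2 + 2 * J * x * r * y * q * M * K ^ 2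
      + 2 * J ^ 3 * M * K ^ 2 - 2 * J ^ 3 * x * y * M * K ^ 2
      + 2 * β * J * z * r * u * q * M * K ^ 2 - 2 * β * J * z ^ 2 * M * K ^ 3
      - 2 * β * J ^ 3 * z * u * M * K ^ 2) * hM2 +
    (2 * J * r * q * M ^ 2 * K - 2 * J * x * r * y * q * M ^ 2 * K
      - 2 * J ^ 3 * M ^ 2 * K + 2 * J ^ 3 * x * y * M ^ 2 * K
      + 2 * β * J * u ^ 2 * M ^ 3 * K - 2 * β * J * z * r * u * q * M ^ 2 * K
      + 2 * β * J ^ 3 * z * u * M ^ 2 * K) * hK2 +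
    (- 2 * β * J * M ^ 2 * K ^ 2) * hS

end keys

lemma key_all (i j : Fin 3)
    {β J x z r y u q M K w1 w2 h v1 v2 g w1' w2' h' v1' v2' g' : ℝ}
    (H : KeyHyp β J x z r y u q M K w1 w2 h v1 v2 g w1' w2' h' v1' v2' g') :
    Dn i β w1 w2 h v1 v2 g * Dn j β w1' w2' h' v1' v2' g' * (2 * J * (K - M)) =
      Nm i β w1 w2 h v1 v2 g * Dn j β w1' w2' h' v1' v2' g' -
      Dn i β w1 w2 h v1 v2 g * Nm j β w1' w2' h' v1' v2' g' := by
  fin_cases i <;> fin_cases j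
  · exact key00 H
  · exact key01 H
  · exact key02 H
  · have := key01 H.symm
    simp only [Fin.zero_eta, Fin.mk_one]
    linear_combination (-1 : ℝ) * this
  · exact key11 H
  · exact key12 H
  · have := key02 H.symm
    simp only [Fin.zero_eta, Fin.reduceFinMk]
    linear_combination (-1 : ℝ) * this
  · have := key12 H.symm
    simp only [Fin.mk_one, Fin.reduceFinMk]
    linear_combination (-1 : ℝ) * this
  · exact key22 H

lemma Dn_scale (i : Fin 3) (e β w1 w2 h v1 v2 g : ℝ) :
    Dn i β (e * w1) (e * w2) (e * h) (e * v1) (e * v2) (e * g) =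
      e * Dn i β w1 w2 h v1 v2 g := by
  fin_cases i <;> simp [Dn] <;> ring

lemma Nm_scale (i : Fin 3) (e β w1 w2 h v1 v2 g : ℝ) :
    Nm i β (e * w1) (e * w2) (e * h) (e * v1) (e * v2) (e * g) =
      e ^ 2 * Nm i β w1 w2 h v1 v2 g := by
  fin_cases i <;> simp [Nm] <;> ring

/-- A reflection step at the vertex `(x, z)` with Joachimsthal constant `J`. -/
structure IsStep (β J w1 w2 h x z μ w1' w2' h' : ℝ) : Prop where
  unit : w1 ^ 2 + w2 ^ 2 = 1
  ell : x ^ 2 + β * z ^ 2 = 1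
  joach : w1 * x + β * (w2 * z) = J
  hh : h = -w2 * x + w1 * z
  mu : μ * (x ^ 2 + β ^ 2 * z ^ 2) = 2 * J
  pos : 0 < x ^ 2 + β ^ 2 * z ^ 2
  r1 : w1' = w1 - μ * x
  r2 : w2' = w2 - μ * (β * z)
  hh' : h' = -w2' * x + w1' * z

lemma IsStep.param {β J w1 w2 h x z μ w1' w2' h' : ℝ}
    (H : IsStep β J w1 w2 h x z μ w1' w2' h') :
    ∃ r M : ℝ, 0 < M ∧ x ^ 2 = 1 - β * z ^ 2 ∧ r ^ 2 = M - J ^ 2 ∧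
      M = 1 + β * (β - 1) * z ^ 2 ∧ M * μ = 2 * J ∧
      M * w1 = J * x - r * β * z ∧ M * w2 = r * x + J * β * z ∧
      M * h = -(r + J * (β - 1) * x * z) ∧
      M * w1' = -J * x - r * β * z ∧ M * w2' = r * x - J * β * z ∧
      M * h' = -(r - J * (β - 1) * x * z) := by
  obtain ⟨h1, h2, h3, h4, h5, h6, h7, h8, h9⟩ := H
  have a1 : (x ^ 2 + β ^ 2 * z ^ 2) * w1 = J * x - (-w1 * β * z + w2 * x) * β * z := by
    rw [← h3]; ring
  have a2 : (x ^ 2 + β ^ 2 * z ^ 2) * w2 = (-w1 * β * z + w2 * x) * x + J * β * z := by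
    rw [← h3]; ring
  have b1 : (x ^ 2 + β ^ 2 * z ^ 2) * w1' = -J * x - (-w1 * β * z + w2 * x) * β * z := by
    rw [h7]; linear_combination a1 - x * h5
  have b2 : (x ^ 2 + β ^ 2 * z ^ 2) * w2' = (-w1 * β * z + w2 * x) * x - J * β * z := by
    rw [h8]; linear_combination a2 - β * z * h5
  refine ⟨-w1 * β * z + w2 * x, x ^ 2 + β ^ 2 * z ^ 2, h6, by linarith, ?_, ?_, by linarith,
    a1, a2, ?_, b1, b2, ?_⟩
  · rw [← h3]; linear_combination (x ^ 2 + β ^ 2 * z ^ 2) * h1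
  · linear_combination h2
  · rw [h4]
    linear_combination (-x) * a2 + z * a1 - (-w1 * β * z + w2 * x) * h2
  · rw [h9]
    linear_combination (-x) * b2 + z * b1 - (-w1 * β * z + w2 * x) * h2

lemma step_identity (i j : Fin 3)
    {β J w1 w2 h x z μ w1' w2' h' v1 v2 g y u m v1' v2' g' : ℝ}
    (H : IsStep β J w1 w2 h x z μ w1' w2' h') (H' : IsStep β J v1 v2 g y u m v1' v2' g') :
    Dn i β w1 w2 h v1 v2 g * Dn j β w1' w2' h' v1' v2' g' * (μ - m) =
      Nm i β w1 w2 h v1 v2 g * Dn j β w1' w2' h' v1' v2' g' -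
      Dn i β w1 w2 h v1 v2 g * Nm j β w1' w2' h' v1' v2' g' := by
  obtain ⟨r, M, M0, a1, a2, a3, a4, a5, a6, a7, a8, a9, a10⟩ := H.param
  obtain ⟨q, K, K0, b1, b2, b3, b4, b5, b6, b7, b8, b9, b10⟩ := H'.param
  have HK : KeyHyp β J x z r y u q M K
      (M * K * w1) (M * K * w2) (M * K * h) (M * K * v1) (M * K * v2) (M * K * g)
      (M * K * w1') (M * K * w2') (M * K * h') (M * K * v1') (M * K * v2') (M * K * g') :=
    { hx := a1, hy := b1, hr := a2, hq := b2, hM := a3, hK := b3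
      e1 := by linear_combination K * a5
      e2 := by linear_combination K * a6
      e3 := by linear_combination K * a7
      e4 := by linear_combination M * b5
      e5 := by linear_combination M * b6
      e6 := by linear_combination M * b7
      d1 := by linear_combination K * a8
      d2 := by linear_combination K * a9
      d3 := by linear_combination K * a10
      d4 := by linear_combination M * b8
      d5 := by linear_combination M * b9
      d6 := by linear_combination M * b10
      hM2 := by rw [a3]; ring
      hK2 := by rw [b3]; ring
      hS := by rw [a3, b3]; ring }
  have key := key_all i j HK
  have e : 2 * J * (K - M) = M * K * (μ - m) := by linear_combination (-K) * a4 + M * b4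
  rw [e] at key
  simp only [Dn_scale, Nm_scale] at key
  have ne : (M * K) ^ 3 ≠ 0 := by positivity
  apply mul_left_cancel₀ ne
  linear_combination key

/-- The telescoping quantity. -/
def Gf (β w1 w2 h v1 v2 g : ℝ) : ℝ :=
  if Dn 0 β w1 w2 h v1 v2 g ≠ 0 then Nm 0 β w1 w2 h v1 v2 g / Dn 0 β w1 w2 h v1 v2 g
  else if Dn 1 β w1 w2 h v1 v2 g ≠ 0 then Nm 1 β w1 w2 h v1 v2 g / Dn 1 β w1 w2 h v1 v2 g
  else Nm 2 β w1 w2 h v1 v2 g / Dn 2 β w1 w2 h v1 v2 g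

lemma Gf_spec (β w1 w2 h v1 v2 g : ℝ)
    (hne : ¬ (h = g ∧ v1 = -w1 ∧ v2 = -w2)) (hβ : 0 < β) :
    ∃ i, Dn i β w1 w2 h v1 v2 g ≠ 0 ∧
      Gf β w1 w2 h v1 v2 g = Nm i β w1 w2 h v1 v2 g / Dn i β w1 w2 h v1 v2 g := by
  by_cases h0 : Dn 0 β w1 w2 h v1 v2 g ≠ 0
  · exact ⟨0, h0, by rw [Gf, if_pos h0]⟩
  by_cases h1 : Dn 1 β w1 w2 h v1 v2 g ≠ 0
  · exact ⟨1, h1, by rw [Gf, if_neg h0, if_pos h1]⟩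
  refine ⟨2, ?_, by rw [Gf, if_neg h0, if_neg h1]⟩
  intro h2
  push Not at h0 h1
  simp only [Dn] at h0 h1 h2
  apply hne
  refine ⟨?_, by linarith, by linarith⟩
  rcases mul_eq_zero.mp h0 with h | h <;> linarith

lemma step_G {β J w1 w2 h x z μ w1' w2' h' v1 v2 g y u m v1' v2' g' : ℝ}
    (H : IsStep β J w1 w2 h x z μ w1' w2' h') (H' : IsStep β J v1 v2 g y u m v1' v2' g')
    (hβ : 0 < β) (n1 : ¬ (h = g ∧ v1 = -w1 ∧ v2 = -w2))
    (n2 : ¬ (h' = g' ∧ v1' = -w1' ∧ v2' = -w2')) :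
    μ - m = Gf β w1 w2 h v1 v2 g - Gf β w1' w2' h' v1' v2' g' := by
  obtain ⟨i, hi, ei⟩ := Gf_spec β w1 w2 h v1 v2 g n1 hβ
  obtain ⟨j, hj, ej⟩ := Gf_spec β w1' w2' h' v1' v2' g' n2 hβ
  have key := step_identity i j H H'
  rw [ei, ej, div_sub_div _ _ hi hj, eq_div_iff (mul_ne_zero hi hj)]
  linear_combination key

lemma step_degenerate {β J w1 w2 h x z μ w1' w2' h' v1 v2 g y u m v1' v2' g' : ℝ}
    (H : IsStep β J w1 w2 h x z μ w1' w2' h') (H' : IsStep β J v1 v2 g y u m v1' v2' g')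
    (hβ : 0 < β) (n1 : h = g ∧ v1 = -w1 ∧ v2 = -w2) :
    μ = m ∧ (h' = g' ∧ v1' = -w1' ∧ v2' = -w2') := by
  obtain ⟨h1, h2, h3, h4, h5, h6, h7, h8, h9⟩ := H
  obtain ⟨k1, k2, k3, k4, k5, k6, k7, k8, k9⟩ := H'
  obtain ⟨rfl, rfl, rfl⟩ := n1
  have det : 0 < w1 ^ 2 + β * w2 ^ 2 := by
    by_cases hw : w2 = 0
    · subst hw; nlinarith
    · have := sq_nonneg w1
      positivity
  have s1 : -w2 * (x + y) + w1 * (z + u) = 0 := by linear_combination k4 - h4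
  have s2 : w1 * (x + y) + β * (w2 * (z + u)) = 0 := by linear_combination h3 - k3
  have t1 : x + y = 0 := by
    have : (w1 ^ 2 + β * w2 ^ 2) * (x + y) = 0 := by
      linear_combination w1 * s2 - β * w2 * s1
    exact (mul_eq_zero.mp this).resolve_left det.ne'
  have t2 : z + u = 0 := by
    have : (w1 ^ 2 + β * w2 ^ 2) * (z + u) = 0 := by
      linear_combination w2 * s2 + w1 * s1
    exact (mul_eq_zero.mp this).resolve_left det.ne'
  obtain rfl : y = -x := by linarith
  obtain rfl : u = -z := by linarith
  have hμ : μ = m := by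
    apply mul_right_cancel₀ h6.ne'
    linear_combination h5 - k5
  subst hμ
  refine ⟨rfl, ?_, ?_, ?_⟩
  · rw [h9, k9, k7, k8, h7, h8]; ring
  · rw [k7, h7]; ring
  · rw [k8, h8]; ring

/-- Signed support value of the `k`-th oriented line. -/
def hZ (x : ℤ → ℝ × ℝ) (k : ℤ) : ℝ :=
  -(dirZ x k).2 * (x (k + 1)).1 + (dirZ x k).1 * (x (k + 1)).2

def muZ (β J : ℝ) (x : ℤ → ℝ × ℝ) (k : ℤ) : ℝ :=
  2 * J / ((x (k + 1)).1 ^ 2 + β ^ 2 * (x (k + 1)).2 ^ 2)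

lemma dirZ_facts (x : ℤ → ℝ × ℝ) (k : ℤ) (hne : x (k + 1) ≠ x k) :
    ∃ l : ℝ, 0 < l ∧ (x (k + 1)).1 = (x k).1 + l * (dirZ x k).1 ∧
      (x (k + 1)).2 = (x k).2 + l * (dirZ x k).2 ∧
      (dirZ x k).1 ^ 2 + (dirZ x k).2 ^ 2 = 1 := by
  set p := x k with hp
  set X := x (k + 1) with hX
  have hpos : 0 < ip (X - p) (X - p) := by
    simp only [ip, Prod.fst_sub, Prod.snd_sub]
    by_contra hcon
    apply hne
    have e1 : X.1 - p.1 = 0 := by nlinarith [sq_nonneg (X.1 - p.1), sq_nonneg (X.2 - p.2)]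
    have e2 : X.2 - p.2 = 0 := by nlinarith [sq_nonneg (X.1 - p.1), sq_nonneg (X.2 - p.2)]
    exact Prod.ext (by linarith) (by linarith)
  have hl : 0 < nrm (X - p) := Real.sqrt_pos.mpr hpos
  have hl2 : nrm (X - p) ^ 2 = ip (X - p) (X - p) := Real.sq_sqrt hpos.le
  refine ⟨nrm (X - p), hl, ?_, ?_, ?_⟩
  · simp only [dirZ, ← hp, ← hX, Prod.smul_fst, Prod.fst_sub, smul_eq_mul]
    field_simp; ring
  · simp only [dirZ, ← hp, ← hX, Prod.smul_snd, Prod.snd_sub, smul_eq_mul]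
    field_simp; ring
  · simp only [dirZ, ← hp, ← hX, Prod.smul_fst, Prod.smul_snd, smul_eq_mul]
    simp only [ip] at hl2
    field_simp
    rw [hl2]; ring

lemma joach_aux (c s β J l p1 p2 w1 w2 X1 X2 t u : ℝ) (hβ : 0 < β) (hβc : β * (1 - c ^ 2) = 1)
    (hJ : J = Real.sqrt (β * (1 - s)))
    (hl : 0 < l) (e1 : X1 = p1 + l * w1) (e2 : X2 = p2 + l * w2) (hw : w1 ^ 2 + w2 ^ 2 = 1)
    (hX : X1 ^ 2 + β * X2 ^ 2 = 1) (hp : p1 ^ 2 + β * p2 ^ 2 = 1)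
    (htu : s * t ^ 2 + (s - c ^ 2) * u ^ 2 = 1) (tp : t * p1 + u * p2 = 1)
    (tX : t * X1 + u * X2 = 1) : w1 * X1 + β * (w2 * X2) = J := by
  have det : 0 < w1 ^ 2 + β * w2 ^ 2 := by
    by_cases h0 : w2 = 0
    · subst h0; nlinarith
    · have := sq_nonneg w1
      positivity
  have hj : 2 * (w1 * X1 + β * (w2 * X2)) = l * (w1 ^ 2 + β * w2 ^ 2) := by
    apply mul_left_cancel₀ hl.ne'
    obtain rfl : p1 = X1 - l * w1 := by linarith
    obtain rfl : p2 = X2 - l * w2 := by linarith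
    linear_combination hX - hp
  have hjpos : 0 < w1 * X1 + β * (w2 * X2) := by
    have := mul_pos hl det
    linarith
  have tw : t * w1 + u * w2 = 0 := by
    apply mul_left_cancel₀ hl.ne'
    rw [e1, e2] at tX
    linear_combination tX - tp
  obtain ⟨lam, ht, hu⟩ : ∃ lam : ℝ, t = -lam * w2 ∧ u = lam * w1 :=
    ⟨-t * w2 + u * w1, by linear_combination (-t) * hw + w1 * tw,
      by linear_combination (-u) * hw + w2 * tw⟩
  subst ht hu
  have hlam : lam * (-w2 * X1 + w1 * X2) = 1 := by linear_combination tX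
  have hh : s * w2 ^ 2 + (s - c ^ 2) * w1 ^ 2 = (-w2 * X1 + w1 * X2) ^ 2 := by
    linear_combination (-w2 * X1 + w1 * X2) ^ 2 * htu -
      (s * w2 ^ 2 + (s - c ^ 2) * w1 ^ 2) * (lam * (-w2 * X1 + w1 * X2) + 1) * hlam
  have hsq : (w1 * X1 + β * (w2 * X2)) ^ 2 = β * (1 - s) := by
    linear_combination (w1 ^ 2 + β * w2 ^ 2) * hX + β * hh - w1 ^ 2 * hβc + (β - β * s) * hw
  rw [hJ, ← hsq, Real.sqrt_sq hjpos.le]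

lemma traj_step (c s : ℝ) (hc0 : 0 < c) (hc1 : c < 1) (n : ℕ) (x : ℤ → ℝ × ℝ)
    (hx : IsPeriodicCausticTraj c s n x) (β J : ℝ) (hβ : 0 < β) (hβc : β * (1 - c ^ 2) = 1)
    (hJ : J = Real.sqrt (β * (1 - s))) (k : ℤ) :
    IsStep β J (dirZ x k).1 (dirZ x k).2 (hZ x k) (x (k + 1)).1 (x (k + 1)).2 (muZ β J x k)
      (dirZ x (k + 1)).1 (dirZ x (k + 1)).2 (hZ x (k + 1)) := by
  obtain ⟨-, hC, hne, hrefl, htan⟩ := hx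
  have hb : (1 - c ^ 2) ≠ 0 := by
    intro h; rw [h] at hβc; simp at hβc
  have hdiv : ∀ a : ℝ, a / (1 - c ^ 2) = β * a := by
    intro a; rw [div_eq_iff hb]; linear_combination (-a) * hβc
  have hell : ∀ k, (x k).1 ^ 2 + β * (x k).2 ^ 2 = 1 := by
    intro k
    have := hC k
    simp only [ellipseC, Set.mem_ofPred_eq, hdiv] at this
    exact this
  obtain ⟨l, hl, e1, e2, hw⟩ := dirZ_facts x k (hne k)
  obtain ⟨l', hl', e1', e2', hw'⟩ := dirZ_facts x (k + 1) (hne (k + 1))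
  obtain ⟨t, u, htu, tp, tX⟩ := htan k
  have hj := joach_aux c s β J l _ _ _ _ _ _ t u hβ hβc hJ hl e1 e2 hw (hell _) (hell _)
    htu tp tX
  have hpos : 0 < (x (k + 1)).1 ^ 2 + β ^ 2 * (x (k + 1)).2 ^ 2 := by
    by_cases h0 : (x (k + 1)).2 = 0
    · have := hell (k + 1)
      rw [h0] at this ⊢
      nlinarith
    · have := sq_nonneg (x (k + 1)).1
      positivity
  have hr := hrefl (k + 1)
  rw [add_sub_cancel_right] at hr
  have hN2 : nrm ((x (k + 1)).1, (x (k + 1)).2 / (1 - c ^ 2)) ^ 2 =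
      (x (k + 1)).1 ^ 2 + β ^ 2 * (x (k + 1)).2 ^ 2 := by
    rw [nrm, Real.sq_sqrt]
    · simp only [ip, hdiv]; ring
    · simp only [ip, hdiv]; nlinarith
  have hN0 : nrm ((x (k + 1)).1, (x (k + 1)).2 / (1 - c ^ 2)) ≠ 0 := by
    intro h; rw [h] at hN2; simp at hN2; linarith
  have hmu : muZ β J x k = 2 * J * (nrm ((x (k + 1)).1, (x (k + 1)).2 / (1 - c ^ 2)))⁻¹ ^ 2 := by
    rw [muZ, ← hN2]; field_simp
  have r1 : (dirZ x (k + 1)).1 = (dirZ x k).1 - muZ β J x k * (x (k + 1)).1 := by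
    rw [hmu]
    rw [hr]
    simp only [nuC, ip, Prod.fst_sub, Prod.smul_fst, Prod.smul_snd, smul_eq_mul]
    generalize (nrm ((x (k + 1)).1, (x (k + 1)).2 / (1 - c ^ 2)))⁻¹ = N
    rw [hdiv, ← hj]; ring
  have r2 : (dirZ x (k + 1)).2 = (dirZ x k).2 - muZ β J x k * (β * (x (k + 1)).2) := by
    rw [hmu]
    rw [hr]
    simp only [nuC, ip, Prod.snd_sub, Prod.smul_fst, Prod.smul_snd, smul_eq_mul]
    generalize (nrm ((x (k + 1)).1, (x (k + 1)).2 / (1 - c ^ 2)))⁻¹ = N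
    rw [hdiv, ← hj]; ring
  refine ⟨hw, hell _, hj, rfl, ?_, hpos, r1, r2, ?_⟩
  · rw [muZ]; field_simp
  · rw [hZ, e1', e2']; ring

lemma IsStep.cos {β J w1 w2 h x z μ w1' w2' h' : ℝ}
    (H : IsStep β J w1 w2 h x z μ w1' w2' h') : w1 * w1' + w2 * w2' = 1 - J * μ := by
  obtain ⟨h1, h2, h3, h4, h5, h6, h7, h8, h9⟩ := H
  rw [h7, h8, ← h3]; linear_combination h1

/-- The sum of the cosines of the angles between consecutive segments of an `n`-periodic
billiard trajectory depends only on the caustic, not on the trajectory. -/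
theorem sum_of_cosines_constant (c s : ℝ) (hc0 : 0 < c) (hc1 : c < 1)
    (n : ℕ) (hn : 2 ≤ n) (x y : ℤ → ℝ × ℝ)
    (hx : IsPeriodicCausticTraj c s n x) (hy : IsPeriodicCausticTraj c s n y) :
    ∑ k ∈ Finset.range n, ip (dirZ x k) (dirZ x (k + 1)) =
    ∑ k ∈ Finset.range n, ip (dirZ y k) (dirZ y (k + 1)) := by
  have hb : 0 < 1 - c ^ 2 := by nlinarith
  obtain ⟨β, hβdef⟩ : ∃ β : ℝ, β = 1 / (1 - c ^ 2) := ⟨_, rfl⟩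
  have hβ : 0 < β := by rw [hβdef]; positivity
  have hβc : β * (1 - c ^ 2) = 1 := by rw [hβdef]; field_simp
  obtain ⟨J, hJ⟩ : ∃ J : ℝ, J = Real.sqrt (β * (1 - s)) := ⟨_, rfl⟩
  have sx := traj_step c s hc0 hc1 n x hx β J hβ hβc hJ
  have sy := traj_step c s hc0 hc1 n y hy β J hβ hβc hJ
  have perd : ∀ z : ℤ → ℝ × ℝ, (∀ k : ℤ, z (k + n) = z k) →
      ∀ k : ℤ, dirZ z (k + n) = dirZ z k ∧ hZ z (k + n) = hZ z k := by
    intro z hz k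
    have e : z (k + n + 1) = z (k + 1) := by
      rw [show k + (n : ℤ) + 1 = (k + 1) + n by ring]; exact hz _
    have d : dirZ z (k + n) = dirZ z k := by simp only [dirZ, e, hz]
    exact ⟨d, by simp only [hZ, e, d]⟩
  have px := perd x hx.1
  have py := perd y hy.1
  simp only [ip]
  simp only [(sx _).cos, (sy _).cos]
  let Dg : ℤ → Prop := fun k => hZ x k = hZ y k ∧ (dirZ y k).1 = -(dirZ x k).1 ∧
    (dirZ y k).2 = -(dirZ x k).2
  by_cases hD : ∃ j, Dg j
  · obtain ⟨j, hj⟩ := hD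
    have up : ∀ m : ℕ, Dg (j + m) := by
      intro m
      induction m with
      | zero => simpa using hj
      | succ m ih =>
        have := (step_degenerate (sx (j + m)) (sy (j + m)) hβ ih).2
        rw [add_assoc] at this
        push_cast
        exact this
    have shift : ∀ (k : ℤ) (m : ℕ), Dg (k + m * n) → Dg k := by
      intro k m
      induction m with
      | zero => intro h; simpa using h
      | succ m ih =>
        intro h
        apply ih
        have e : k + ((m + 1 : ℕ) : ℤ) * n = (k + m * n) + n := by push_cast; ring
        rw [e] at h
        simpa only [Dg, (px _).1, (px _).2, (py _).1, (py _).2] using h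
    have all : ∀ k : ℤ, Dg k := by
      intro k
      apply shift k (j - k).natAbs
      have h1 : j - k ≤ (j - k).natAbs := Int.le_natAbs
      have h2 : ((j - k).natAbs : ℤ) ≤ (j - k).natAbs * n := by
        have : (1 : ℤ) ≤ n := by omega
        nlinarith [Int.natCast_nonneg (j - k).natAbs]
      have h3 := up (k + (j - k).natAbs * n - j).toNat
      rw [Int.toNat_of_nonneg (by linarith)] at h3
      rwa [add_sub_cancel] at h3
    apply Finset.sum_congr rfl
    intro k _
    rw [(step_degenerate (sx k) (sy k) hβ (all k)).1]
  · push Not at hD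
    let G : ℤ → ℝ := fun k => Gf β (dirZ x k).1 (dirZ x k).2 (hZ x k)
      (dirZ y k).1 (dirZ y k).2 (hZ y k)
    have st : ∀ k : ℤ, muZ β J x k - muZ β J y k = G k - G (k + 1) := fun k =>
      step_G (sx k) (sy k) hβ (hD k) (hD (k + 1))
    have tele : ∑ k ∈ Finset.range n, (muZ β J x k - muZ β J y k) = 0 := by
      have h1 : ∀ k ∈ Finset.range n, muZ β J x k - muZ β J y k =
          (fun i : ℕ => G i) k - (fun i : ℕ => G i) (k + 1) := by
        intro k _
        rw [st]; push_cast; rfl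
      rw [Finset.sum_congr rfl h1, Finset.sum_range_sub']
      have := px 0
      have := py 0
      simp only [zero_add] at *
      simp only [G, Nat.cast_zero, *, sub_self]
    rw [← sub_eq_zero, ← Finset.sum_sub_distrib]
    have : ∀ k ∈ Finset.range n, (1 - J * muZ β J x k - (1 - J * muZ β J y k)) =
        -J * (muZ β J x k - muZ β J y k) := by intro k _; ring
    rw [Finset.sum_congr rfl this, ← Finset.mul_sum, tele, mul_zero]
end
end
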